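/- Let (A, 𝔪) be a two-dimensional excellent normal local domain over an algebraically closed field and let I, J ⊆ A be 𝔪-primary ideals. If both Rees algebras 𝓡(I) = A[It] and 𝓡(J) = A[Jt] are Cohen–Macaulay normal domains, then the Rees algebra 𝓡(IJ) = A[(IJ)t] of the product ideal IJ is a Cohen–Macaulay normal domain. -/

import Mathlib

/-! Auxiliary definitions.

Mathlib does not yet know about excellent rings; the excellence hypothesis of the paper
is used only to guarantee the existence of resolutions and of the normal Hilbert
polynomial, which we hypothesize directly where needed. -/

/-- The length `ℓ_R(M)` of a module, defined as the Krull dimension of its lattice of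
submodules (for modules of finite length this is the usual Jordan–Hölder length). -/
noncomputable def moduleLength (R M : Type*) [CommRing R] [AddCommGroup M] [Module R M] :
    WithBot ℕ∞ :=
  Order.krullDim (Submodule R M)

/-- `x` is integral over the ideal `I`: it satisfies an equation of integral dependence
`x ^ n + c 1 * x ^ (n-1) + ⋯ + c n = 0` with `c i ∈ I ^ i`. -/
def IsIntegralOverIdeal {A : Type*} [CommRing A] (I : Ideal A) (x : A) : Prop :=
  ∃ n : ℕ, 0 < n ∧ ∃ c : ℕ → A, (∀ i, 1 ≤ i → i ≤ n → c i ∈ I ^ i) ∧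
    x ^ n + ∑ i ∈ Finset.Icc 1 n, c i * x ^ (n - i) = 0

/-- The integral closure `J̄` of an ideal `J`: the set of elements integral over `J`
(this set is an ideal; we take the ideal it generates). -/
noncomputable def idealIntegralClosure {A : Type*} [CommRing A] (I : Ideal A) : Ideal A :=
  Ideal.span {x | IsIntegralOverIdeal I x}

/-- An ideal is integrally closed if it contains every element integral over it. -/
def IdealIsIntegrallyClosed {A : Type*} [CommRing A] (I : Ideal A) : Prop :=
  ∀ x, IsIntegralOverIdeal I x → x ∈ I

/-- A Noetherian local ring is Cohen–Macaulay if some regular sequence contained in the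
maximal ideal has length equal to the Krull dimension of the ring. -/
def IsCohenMacaulayLocalRing (R : Type*) [CommRing R] : Prop :=
  IsNoetherianRing R ∧ ∃ h : IsLocalRing R,
    letI := h
    ∃ rs : List R, (∀ x ∈ rs, x ∈ IsLocalRing.maximalIdeal R) ∧
      RingTheory.Sequence.IsRegular R rs ∧ (rs.length : WithBot ℕ∞) = ringKrullDim R

/-- A Noetherian ring is Cohen–Macaulay if all its localizations at primes are
Cohen–Macaulay local rings. -/
def IsCohenMacaulayRing (R : Type*) [CommRing R] : Prop :=
  IsNoetherianRing R ∧ ∀ (P : Ideal R) (hP : P.IsPrime),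
    letI := hP
    IsCohenMacaulayLocalRing (Localization.AtPrime P)

/-- A Cohen–Macaulay normal domain. -/
def IsCMNormalDomain (R : Type*) [CommRing R] : Prop :=
  IsCohenMacaulayRing R ∧ IsDomain R ∧ IsIntegrallyClosed R

/-! For general `a, a' ∈ I` and `b, b' ∈ J`, the pairs `(a, a')` and `(b, b')` are reductions of
`I` and `J` consisting of superficial elements, because the Rees algebras are normal, and `(a, b')`
and `(a', b)` are joint reductions of `I` and `J`. Since `𝓡(I)` has depth three at its irrelevant
maximal ideal, `a, a't` is a regular sequence modulo which that maximal ideal is not associated;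
this forces `I² = (a, a')I`, and likewise `J² = (b, b')J`.

On the normal charts `A[I/a']` and `A[J/b]` these equalities turn an integral equation over `(IJ)ⁿ`
into membership in `aⁿJⁿ + b'ⁿIⁿ`. Hence every `(IJ)ⁿ` is integrally closed, so `𝓡(IJ)` is normal,
and `IJ = aJ + b'I = a'J + bI`. With `c = ab` and `d = a'b'` these two expressions give
`(IJ)² = (c, d)IJ`. It follows that `c, dt, d + ct` is a regular sequence at the irrelevant maximal
ideal of `𝓡(IJ)`; at every other prime `𝓡(IJ)` is a localization of a polynomial ring over a normal
domain of dimension at most two, so it is Cohen–Macaulay there as well.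
-/

open IsLocalRing Polynomial Filter RingTheory.Sequence

section AssociatedPrimes

variable {R : Type*} [CommRing R] {i P Q : Ideal R}

theorem isSMulRegular_quotient_iff {x : R} :
    IsSMulRegular (R ⧸ i) x ↔ ∀ r, x * r ∈ i → r ∈ i := by
  simp only [isSMulRegular_quotient_iff_mem_of_smul_mem, smul_eq_mul]

theorem bot_colon_singleton_mk (e : R) :
    (⊥ : Submodule R (R ⧸ i)).colon {Ideal.Quotient.mk i e} = i.colon {e} := by
  ext s
  rw [Submodule.mem_colon_singleton, Submodule.mem_colon_singleton, Submodule.mem_bot, smul_eq_mul,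
    ← Ideal.Quotient.eq_zero_iff_mem, map_mul]
  rfl

theorem mem_associatedPrimes_quotient_iff [IsNoetherianRing R] :
    P ∈ associatedPrimes R (R ⧸ i) ↔ P.IsPrime ∧ ∃ e, ∀ s, s ∈ P ↔ s * e ∈ i := by
  rw [AssociatedPrimes.mem_iff, isAssociatedPrime_iff, Ideal.Quotient.mk_surjective.exists]
  simp only [bot_colon_singleton_mk, SetLike.ext_iff, Submodule.mem_colon_singleton, smul_eq_mul]

theorem le_of_mem_associatedPrimes_quotient [IsNoetherianRing R]
    (hP : P ∈ associatedPrimes R (R ⧸ i)) : i ≤ P := by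
  obtain ⟨-, e, he⟩ := mem_associatedPrimes_quotient_iff.1 hP
  exact fun s hs => (he s).2 (i.mul_mem_right e hs)

theorem exists_associatedPrime_colon_le [IsNoetherianRing R] {e : R} (he : e ∉ i) :
    ∃ P ∈ associatedPrimes R (R ⧸ i), i.colon {e} ≤ P := by
  obtain ⟨P, hP, hle⟩ := exists_le_isAssociatedPrime_of_isNoetherianRing R (Ideal.Quotient.mk i e)
    (mt Ideal.Quotient.eq_zero_iff_mem.1 he)
  exact ⟨P, hP, bot_colon_singleton_mk e ▸ hle⟩

theorem isSMulRegular_iff_forall_notMem [IsNoetherianRing R] {N : Type*} [AddCommGroup N]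
    [Module R N] {x : R} : IsSMulRegular N x ↔ ∀ P ∈ associatedPrimes R N, x ∉ P := by
  rw [← not_iff_not]
  have h := Set.ext_iff.1 (biUnion_associatedPrimes_eq_compl_regular R N) x
  simp only [Set.mem_iUnion, SetLike.mem_coe, exists_prop, Set.mem_compl_iff,
    Set.mem_ofPred_eq] at h
  simp only [← h, not_forall, not_not, exists_prop]

theorem exists_mem_forall_notMem {s : Set (Ideal R)} (hs : s.Finite)
    (hprime : ∀ P ∈ s, P.IsPrime) (hle : ∀ P ∈ s, ¬ Q ≤ P) : ∃ t ∈ Q, ∀ P ∈ s, t ∉ P := by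
  by_contra! h
  obtain ⟨P, hP, hQP⟩ := (Ideal.subset_union_prime_finite hs (f := id) ⊥ ⊥
    fun P hP _ _ => hprime P hP).1 (fun t ht => by simpa using h t ht : (Q : Set R) ⊆ _)
  exact hle P hP hQP

end AssociatedPrimes

section Normal

variable {R : Type*} [CommRing R] [IsDomain R] [IsNoetherianRing R] [IsIntegrallyClosed R]

-- If `e N ⊆ x N` then `e / x` stabilizes a nonzero finite module, so it is integral over `R`.
theorem dvd_of_smul_le_smul {N : Ideal R} (hN : N ≠ ⊥) {e x : R} (hx : x ≠ 0)
    (h : ∀ n ∈ N, ∃ n' ∈ N, e * n = x * n') : x ∣ e := by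
  let K := FractionRing R
  have hxK : algebraMap R K x ≠ 0 := by simpa using hx
  have hint : IsIntegral R (algebraMap R K e / algebraMap R K x) := by
    refine isIntegral_of_smul_mem_submodule (N := Submodule.map (Algebra.linearMap R K) N) ?_
      ((IsNoetherian.noetherian N).map _) _ ?_
    · rw [← Submodule.map_bot (Algebra.linearMap R K)]
      exact (Submodule.map_injective_of_injective (IsFractionRing.injective R K)).ne hN
    · rintro _ ⟨n, hn, rfl⟩
      obtain ⟨n', hn', hnn'⟩ := h n hn
      refine ⟨n', hn', ?_⟩
      rw [Algebra.linearMap_apply, Algebra.linearMap_apply, smul_eq_mul, div_mul_eq_mul_div,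
        eq_div_iff hxK, ← map_mul, ← map_mul, hnn', mul_comm]
  obtain ⟨y, hy⟩ := IsIntegrallyClosed.isIntegral_iff.1 hint
  refine ⟨y, IsFractionRing.injective R K ?_⟩
  rw [map_mul, hy, mul_div_cancel₀ _ hxK]

/- With `P = (x : e)`, the determinant trick gives `e p = x s` for some `s ∉ P`, whence
`s P ⊆ (p)`; a nonzero prime `Q < P` then cannot contain `p`, and so `e Q ⊆ x Q`. -/
theorem eq_of_le_of_mem_associatedPrimes {x : R} (hx : x ≠ 0) {P Q : Ideal R}
    (hP : P ∈ associatedPrimes R (R ⧸ Ideal.span {x})) (hQ : Q.IsPrime) (hQP : Q ≤ P)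
    (hQ0 : Q ≠ ⊥) : Q = P := by
  obtain ⟨hPp, e, he⟩ := mem_associatedPrimes_quotient_iff.1 hP
  have hne : ¬ x ∣ e := fun h => hPp.ne_top <| P.eq_top_iff_one.2 <| (he 1).2 <| by
    rwa [one_mul, Ideal.mem_span_singleton]
  have hdiv (s : R) (hs : s ∈ P) : ∃ t, e * s = x * t := by
    obtain ⟨t, ht⟩ := Ideal.mem_span_singleton.1 ((he s).1 hs)
    exact ⟨t, by rw [mul_comm, ht]⟩
  obtain ⟨p, s, hs, hps⟩ : ∃ p, ∃ s ∉ P, e * p = x * s := by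
    by_contra! hcon
    refine hne (dvd_of_smul_le_smul (ne_bot_of_le_ne_bot hQ0 hQP) hx fun n hn => ?_)
    obtain ⟨t, ht⟩ := hdiv n hn
    exact ⟨t, by_contra fun h => hcon n t h ht, ht⟩
  have hswap {y t : R} (h : e * y = x * t) : s * y = p * t :=
    mul_left_cancel₀ hx (by linear_combination p * h - y * hps)
  refine le_antisymm hQP ?_
  by_cases hpQ : p ∈ Q
  · intro y hy
    obtain ⟨t, ht⟩ := hdiv y hy
    have hsy : s * y ∈ Q := hswap ht ▸ Q.mul_mem_right _ hpQ
    exact (hQ.mem_or_mem hsy).resolve_left (mt (@hQP s) hs)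
  · refine absurd (dvd_of_smul_le_smul hQ0 hx fun n hn => ?_) hne
    obtain ⟨t, ht⟩ := hdiv n (hQP hn)
    have hpt : p * t ∈ Q := hswap ht ▸ Q.mul_mem_left _ hn
    exact ⟨t, (hQ.mem_or_mem hpt).resolve_left hpQ, ht⟩

theorem mem_minimalPrimes_span_singleton {x : R} (hx : x ≠ 0) {P : Ideal R}
    (hP : P ∈ associatedPrimes R (R ⧸ Ideal.span {x})) : P ∈ (Ideal.span {x}).minimalPrimes := by
  refine ⟨⟨hP.isPrime, le_of_mem_associatedPrimes_quotient hP⟩, fun Q hQ hQP => ?_⟩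
  have hQ0 : Q ≠ ⊥ := ne_bot_of_le_ne_bot (by simpa using hx) hQ.2
  exact (eq_of_le_of_mem_associatedPrimes hx hP hQ.1 hQP hQ0).ge

theorem height_le_one_of_mem_associatedPrimes {x : R} (hx : x ≠ 0) {P : Ideal R}
    (hP : P ∈ associatedPrimes R (R ⧸ Ideal.span {x})) : P.height ≤ 1 :=
  Ideal.height_le_one_of_isPrincipal_of_mem_minimalPrimes _ P
    (mem_minimalPrimes_span_singleton hx hP)

end Normal

section Depth

variable {R : Type*} [CommRing R] [IsNoetherianRing R] [IsLocalRing R]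
  {N : Type*} [AddCommGroup N] [Module R N]

theorem maximalIdeal_mem_associatedPrimes_iff :
    maximalIdeal R ∈ associatedPrimes R N ↔ ∃ e : N, e ≠ 0 ∧ ∀ m ∈ maximalIdeal R, m • e = 0 := by
  rw [AssociatedPrimes.mem_iff, isAssociatedPrime_iff]
  constructor
  · rintro ⟨-, e, he⟩
    refine ⟨e, ?_, fun m hm => by rwa [he, Submodule.mem_colon_singleton, Submodule.mem_bot] at hm⟩
    rintro rfl
    exact (maximalIdeal.isMaximal R).ne_top (he.trans Submodule.colon_singleton_zero)
  · rintro ⟨e, he, hm⟩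
    have hle : maximalIdeal R ≤ (⊥ : Submodule R N).colon {e} := fun m hmm => by
      rw [Submodule.mem_colon_singleton, Submodule.mem_bot, hm m hmm]
    refine ⟨inferInstance, e, (maximalIdeal.isMaximal R).eq_of_le (fun htop => he ?_) hle⟩
    rw [← one_smul R e, ← Submodule.mem_bot R, ← Submodule.mem_colon_singleton, htop]
    trivial

theorem maximalIdeal_mem_associatedPrimes_quotSMulTop_iff {x : R} :
    maximalIdeal R ∈ associatedPrimes R (QuotSMulTop x N) ↔
      ∃ e : N, (¬ ∃ t, x • t = e) ∧ ∀ m ∈ maximalIdeal R, ∃ t : N, x • t = m • e := by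
  rw [maximalIdeal_mem_associatedPrimes_iff, (Submodule.Quotient.mk_surjective _).exists]
  simp only [← Submodule.Quotient.mk_smul, ne_eq, Submodule.Quotient.mk_eq_zero,
    Submodule.mem_smul_pointwise_iff_exists, Submodule.mem_top, true_and]

-- A socle element `e` of `N / xN` gives `y e = x f`, where `f` is a socle element of `N / yN`.
theorem maximalIdeal_mem_associatedPrimes_quotSMulTop_of_isSMulRegular {x y : R}
    (hy : y ∈ maximalIdeal R) (hxN : IsSMulRegular N x) (hyN : IsSMulRegular N y)
    (h : maximalIdeal R ∈ associatedPrimes R (QuotSMulTop x N)) :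
    maximalIdeal R ∈ associatedPrimes R (QuotSMulTop y N) := by
  rw [maximalIdeal_mem_associatedPrimes_quotSMulTop_iff] at h ⊢
  obtain ⟨e, he, hsoc⟩ := h
  obtain ⟨f, hf⟩ := hsoc y hy
  refine ⟨f, ?_, fun m hm => ?_⟩
  · rintro ⟨t, rfl⟩
    exact he ⟨t, hyN ((smul_comm y x t).trans hf)⟩
  · obtain ⟨t, ht⟩ := hsoc m hm
    refine ⟨t, hxN ?_⟩
    calc x • y • t = y • x • t := smul_comm ..
      _ = m • y • e := by rw [ht, smul_comm]
      _ = x • m • f := by rw [← hf, smul_comm]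

theorem maximalIdeal_notMem_associatedPrimes {x : R} (hx : x ∈ maximalIdeal R)
    (hxN : IsSMulRegular N x) : maximalIdeal R ∉ associatedPrimes R N := by
  rw [maximalIdeal_mem_associatedPrimes_iff]
  rintro ⟨e, he, hsoc⟩
  exact he (hxN (by simp only [hsoc x hx, smul_zero]))

theorem exists_isSMulRegular_and_isSMulRegular {N' : Type*} [AddCommGroup N'] [Module R N']
    [Module.Finite R N] [Module.Finite R N'] (hN : maximalIdeal R ∉ associatedPrimes R N)
    (hN' : maximalIdeal R ∉ associatedPrimes R N') :
    ∃ w ∈ maximalIdeal R, IsSMulRegular N w ∧ IsSMulRegular N' w := by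
  obtain ⟨w, hw, h⟩ := exists_mem_forall_notMem (Q := maximalIdeal R)
    ((associatedPrimes.finite R N).union (associatedPrimes.finite R N'))
    (fun P hP => hP.elim (·.isPrime) (·.isPrime)) (fun P hP hle => by
      have hmax : P.IsPrime → maximalIdeal R = P := fun hp =>
        (maximalIdeal.isMaximal R).eq_of_le hp.ne_top hle
      rcases hP with hP | hP
      · exact hN (hmax hP.isPrime ▸ hP)
      · exact hN' (hmax hP.isPrime ▸ hP))
  exact ⟨w, hw, isSMulRegular_iff_forall_notMem.2 fun P hP => h P (.inl hP),
    isSMulRegular_iff_forall_notMem.2 fun P hP => h P (.inr hP)⟩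

theorem isWeaklyRegular_cons_iff_of_forall_mem_maximalIdeal [Module.Finite R N] {r : R}
    {rs : List R} (h : ∀ x ∈ r :: rs, x ∈ maximalIdeal R) : IsWeaklyRegular N (r :: rs) ↔
      IsWeaklyRegular N rs ∧ IsSMulRegular (N ⧸ Ideal.ofList rs • (⊤ : Submodule R N)) r := by
  rw [← isWeaklyRegular_singleton_iff, ← isWeaklyRegular_append_iff]
  exact ⟨fun hr => isWeaklyRegular_of_perm_of_subset_maximalIdeal hr
      (List.perm_append_singleton r rs).symm h,
    fun hr => isWeaklyRegular_of_perm_of_subset_maximalIdeal hr (List.perm_append_singleton r rs)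
      fun x hx => h x ((List.perm_append_singleton r rs).subset hx)⟩

/- Induction on the length: both sequences may be changed so as to contain a common element `w`,
which is moved to the front and divided out. -/
theorem maximalIdeal_mem_associatedPrimes_of_length_eq [Module.Finite R N] {rs ss : List R}
    (hrs : ∀ r ∈ rs, r ∈ maximalIdeal R) (hss : ∀ s ∈ ss, s ∈ maximalIdeal R)
    (hrsN : IsWeaklyRegular N rs) (hssN : IsWeaklyRegular N ss) (hlen : rs.length = ss.length)
    (h : maximalIdeal R ∈ associatedPrimes R (N ⧸ Ideal.ofList rs • (⊤ : Submodule R N))) :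
    maximalIdeal R ∈ associatedPrimes R (N ⧸ Ideal.ofList ss • (⊤ : Submodule R N)) := by
  induction rs generalizing N ss with
  | nil => rwa [List.length_eq_zero_iff.1 hlen.symm]
  | cons r rs ih =>
    obtain _ | ⟨s, ss⟩ := ss
    · simp at hlen
    obtain ⟨hrsN', hr⟩ := (isWeaklyRegular_cons_iff_of_forall_mem_maximalIdeal hrs).1 hrsN
    obtain ⟨hssN', hs⟩ := (isWeaklyRegular_cons_iff_of_forall_mem_maximalIdeal hss).1 hssN
    obtain ⟨hr_mem, hrs'⟩ := List.forall_mem_cons.1 hrs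
    obtain ⟨hs_mem, hss'⟩ := List.forall_mem_cons.1 hss
    obtain ⟨w, hw, hwr, hws⟩ := exists_isSMulRegular_and_isSMulRegular
      (maximalIdeal_notMem_associatedPrimes hr_mem hr)
      (maximalIdeal_notMem_associatedPrimes hs_mem hs)
    have hrw := (isWeaklyRegular_cons_iff_of_forall_mem_maximalIdeal
      (List.forall_mem_cons.2 ⟨hw, hrs'⟩)).2 ⟨hrsN', hwr⟩
    have hsw := (isWeaklyRegular_cons_iff_of_forall_mem_maximalIdeal
      (List.forall_mem_cons.2 ⟨hw, hss'⟩)).2 ⟨hssN', hws⟩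
    have outer (x : R) (xs : List R) := LinearEquiv.AssociatedPrimes.eq
      (Submodule.quotOfListConsSMulTopEquivQuotSMulTopOuter N x xs)
    have inner (x : R) (xs : List R) := LinearEquiv.AssociatedPrimes.eq
      (Submodule.quotOfListConsSMulTopEquivQuotSMulTopInner N x xs)
    rw [outer] at h ⊢
    refine maximalIdeal_mem_associatedPrimes_quotSMulTop_of_isSMulRegular hs_mem hws hs ?_
    rw [← outer, inner]
    refine ih hrs' hss' ((isWeaklyRegular_cons_iff N w rs).1 hrw).2
      ((isWeaklyRegular_cons_iff N w ss).1 hsw).2 (by simpa using hlen) ?_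
    rw [← inner, outer]
    exact maximalIdeal_mem_associatedPrimes_quotSMulTop_of_isSMulRegular hw hr hwr h

theorem maximalIdeal_notMem_associatedPrimes_of_length_lt [Module.Finite R N] {rs ss : List R}
    (hrs : ∀ r ∈ rs, r ∈ maximalIdeal R) (hss : ∀ s ∈ ss, s ∈ maximalIdeal R)
    (hrsN : IsWeaklyRegular N rs) (hssN : IsWeaklyRegular N ss) (hlen : ss.length < rs.length) :
    maximalIdeal R ∉ associatedPrimes R (N ⧸ Ideal.ofList ss • (⊤ : Submodule R N)) := by
  intro h
  rw [← List.take_append_drop ss.length rs] at hrsN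
  obtain ⟨htake, hdrop⟩ := (isWeaklyRegular_append_iff N _ _).1 hrsN
  obtain ⟨w, ws, hws⟩ := List.exists_cons_of_length_pos (l := rs.drop ss.length) (by simpa)
  have hw : w ∈ maximalIdeal R := hrs w (List.mem_of_mem_drop (hws ▸ List.mem_cons_self))
  rw [hws] at hdrop
  exact maximalIdeal_notMem_associatedPrimes hw ((isWeaklyRegular_cons_iff _ w ws).1 hdrop).1
    (maximalIdeal_mem_associatedPrimes_of_length_eq hss
      (fun r hr => hrs r (List.mem_of_mem_take hr)) hssN htake (by simpa using hlen.le) h)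

end Depth

section CohenMacaulay

variable {R S : Type*} [CommRing R] [CommRing S]

theorem ringKrullDim_eq_length_of_isWeaklyRegular [IsNoetherianRing R] [IsLocalRing R]
    {rs : List R} (hrs : IsWeaklyRegular R rs)
    (hmin : maximalIdeal R ∈ (Ideal.ofList rs).minimalPrimes) : ringKrullDim R = rs.length := by
  have hle : Ideal.ofList rs ≤ maximalIdeal R := hmin.1.2
  have hreg : IsRegular R rs := IsRegular.of_isWeaklyRegular_of_mem_maximalIdeal R
    (fun r hr => hle (Ideal.subset_span hr)) hrs
  have := quotient_artinian_of_mem_minimalPrimes_of_isLocalRing (Ideal.ofList rs) hmin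
  have : Nontrivial (R ⧸ Ideal.ofList rs) :=
    Ideal.Quotient.nontrivial_iff.2 (ne_top_of_le_ne_top (maximalIdeal.isMaximal R).ne_top hle)
  have hzero : ringKrullDim (R ⧸ Ideal.ofList rs) = 0 :=
    ringKrullDimZero_iff_ringKrullDim_eq_zero.1 inferInstance
  rw [← ringKrullDim_add_length_eq_ringKrullDim_of_isRegular rs hreg, hzero, zero_add]

theorem isCohenMacaulayLocalRing_atPrime [IsNoetherianRing R] {P : Ideal R} [P.IsPrime]
    {rs : List R} (hrs : IsWeaklyRegular R rs) (hmin : P ∈ (Ideal.ofList rs).minimalPrimes) :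
    IsCohenMacaulayLocalRing (Localization.AtPrime P) := by
  have hmem (r : R) (hr : r ∈ rs) : r ∈ P := hmin.1.2 (Ideal.subset_span hr)
  have hreg := hrs.isRegular_of_isLocalization_of_mem (Localization.AtPrime P) P hmem
  have : IsNoetherianRing (Localization.AtPrime P) :=
    IsLocalization.isNoetherianRing P.primeCompl _ inferInstance
  refine ⟨this, inferInstance, rs.map (algebraMap R _), fun x hx => ?_, hreg, ?_⟩
  · obtain ⟨r, hr, rfl⟩ := List.mem_map.1 hx
    exact (IsLocalization.AtPrime.to_map_mem_maximal_iff _ P r).2 (hmem r hr)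
  · refine (ringKrullDim_eq_length_of_isWeaklyRegular hreg.1 ?_).symm
    rw [← Ideal.map_ofList, IsLocalization.minimalPrimes_map P.primeCompl]
    simpa only [Set.mem_preimage, Localization.AtPrime.under_maximalIdeal]

theorem notMem_associatedPrimes_of_isCohenMacaulayLocalRing [IsNoetherianRing R] {P : Ideal R}
    [P.IsPrime] (hP : IsCohenMacaulayLocalRing (Localization.AtPrime P)) {rs : List R}
    (hmem : ∀ r ∈ rs, r ∈ P) (hrs : IsWeaklyRegular R rs) (hlen : rs.length < P.height) :
    P ∉ associatedPrimes R (R ⧸ Ideal.ofList rs) := by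
  intro hass
  obtain ⟨-, e, he⟩ := mem_associatedPrimes_quotient_iff.1 hass
  obtain ⟨_, _, ss, hssmem, hss, hssdim⟩ := hP
  rw [IsLocalization.AtPrime.ringKrullDim_eq_height P] at hssdim
  refine maximalIdeal_notMem_associatedPrimes_of_length_lt hssmem
    (ss := rs.map (algebraMap R (Localization.AtPrime P))) (fun x hx => ?_) hss.1
    (hrs.of_isLocalization (Localization.AtPrime P) P.primeCompl) ?_ ?_
  · obtain ⟨r, hr, rfl⟩ := List.mem_map.1 hx
    exact (IsLocalization.AtPrime.to_map_mem_maximal_iff _ P r).2 (hmem r hr)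
  · rw [List.length_map, ← Nat.cast_lt (α := ℕ∞)]
    exact hlen.trans_eq (by exact_mod_cast hssdim.symm)
  · rw [smul_eq_mul, Ideal.mul_top, ← Ideal.map_ofList, mem_associatedPrimes_quotient_iff]
    refine ⟨inferInstance, algebraMap R _ e, fun s => ?_⟩
    obtain ⟨⟨r, t⟩, rfl⟩ := IsLocalization.mk'_surjective P.primeCompl s
    rw [IsLocalization.AtPrime.mk'_mem_maximal_iff _ P,
      ← IsLocalization.mk'_one (M := P.primeCompl), ← IsLocalization.mk'_mul, mul_one,
      IsLocalization.mk'_mem_map_algebraMap_iff]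
    refine ⟨fun hr => ⟨1, one_mem _, by simpa using (he r).1 hr⟩, fun ⟨c, hc, hcr⟩ => ?_⟩
    have hcrP : c * r ∈ P := (he (c * r)).2 (by rwa [mul_assoc])
    exact (Ideal.IsPrime.mem_or_mem ‹P.IsPrime› hcrP).resolve_left hc

theorem IsCohenMacaulayLocalRing.of_ringEquiv (h : IsCohenMacaulayLocalRing R) (e : R ≃+* S) :
    IsCohenMacaulayLocalRing S := by
  obtain ⟨_, _, rs, hmem, hreg, hdim⟩ := h
  have := e.isLocalRing
  refine ⟨isNoetherianRing_of_ringEquiv R e, inferInstance, rs.map e, fun x hx => ?_, ?_, ?_⟩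
  · obtain ⟨y, hy, rfl⟩ := List.mem_map.1 hx
    rw [mem_maximalIdeal, mem_nonunits_iff, MulEquiv.isUnit_map]
    exact hmem y hy
  · refine (AddEquiv.isRegular_congr (e := e.toAddEquiv) ?_).1 hreg
    exact List.forall₂_map_right_iff.2 (List.forall₂_same.2 fun r _ x => by simp)
  · rw [List.length_map, hdim, ringKrullDim_eq_of_ringEquiv e]

theorem isWeaklyRegular_append_singleton_iff {rs : List R} {x : R} :
    IsWeaklyRegular R (rs ++ [x]) ↔
      IsWeaklyRegular R rs ∧ IsSMulRegular (R ⧸ Ideal.ofList rs) x := by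
  rw [isWeaklyRegular_append_iff, isWeaklyRegular_singleton_iff, smul_eq_mul, Ideal.mul_top]

variable [IsDomain R]

theorem isWeaklyRegular_singleton_of_ne_zero {x : R} (hx : x ≠ 0) : IsWeaklyRegular R [x] :=
  (isWeaklyRegular_singleton_iff R x).2 (IsSMulRegular.of_ne_zero hx)

theorem isWeaklyRegular_pair {x y : R} (hx : x ≠ 0)
    (hy : IsSMulRegular (R ⧸ Ideal.span {x}) y) : IsWeaklyRegular R [x, y] :=
  isWeaklyRegular_append_singleton_iff (rs := [x]).2
    ⟨isWeaklyRegular_singleton_of_ne_zero hx, by rwa [Ideal.ofList_singleton]⟩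

theorem isWeaklyRegular_triple {x y z : R} (hx : x ≠ 0)
    (hy : IsSMulRegular (R ⧸ Ideal.span {x}) y) (hz : IsSMulRegular (R ⧸ Ideal.span {x, y}) z) :
    IsWeaklyRegular R [x, y, z] :=
  isWeaklyRegular_append_singleton_iff (rs := [x, y]).2
    ⟨isWeaklyRegular_pair hx hy, by
      rwa [Ideal.ofList_cons, Ideal.ofList_singleton, ← Ideal.span_insert]⟩

end CohenMacaulay

section Height

variable {R : Type*} [CommRing R]

theorem height_add_one_le_height_sup_span_singleton {i : Ideal R} {y : R}
    (hy : ∀ P ∈ i.minimalPrimes, y ∉ P) : i.height + 1 ≤ (i ⊔ Ideal.span {y}).height := by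
  rw [Ideal.height_eq_inf_minimalPrimes (I := i ⊔ Ideal.span {y})]
  refine le_iInf₂ fun Q hQ => ?_
  have := hQ.1.1
  obtain ⟨P, hP, hPQ⟩ := Ideal.exists_minimalPrimes_le (le_sup_left.trans hQ.1.2)
  have := hP.1.1
  have hyQ : y ∈ Q := hQ.1.2 (Ideal.mem_sup_right (Ideal.mem_span_singleton_self y))
  calc i.height + 1 ≤ P.height + 1 := by gcongr; exact hP.1.2
    _ ≤ Q.height := Ideal.height_add_one_le_of_lt_of_isPrime
      (lt_of_le_of_ne hPQ fun h => hy P hP (h ▸ hyQ))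

variable [IsDomain R] {x y z : R}

theorem two_le_height_span_pair (hx : x ≠ 0) (hy : ∀ P ∈ (Ideal.span {x}).minimalPrimes, y ∉ P) :
    2 ≤ (Ideal.span {x, y}).height := by
  rw [Ideal.span_insert, ← one_add_one_eq_two]
  exact (add_le_add_left (Ideal.one_le_height_span_singleton_of_mem_nonZeroDivisors
    (mem_nonZeroDivisors_of_ne_zero hx)) 1).trans (height_add_one_le_height_sup_span_singleton hy)

theorem span_pair_sup_span_singleton_eq_top (hdim : ringKrullDim R ≤ 2) (hx : x ≠ 0)
    (hy : ∀ P ∈ (Ideal.span {x}).minimalPrimes, y ∉ P)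
    (hz : ∀ P ∈ (Ideal.span {x, y}).minimalPrimes, z ∉ P) :
    Ideal.span {x, y} ⊔ Ideal.span {z} = ⊤ := by
  by_contra hne
  have h3 : (3 : ℕ∞) ≤ (Ideal.span {x, y} ⊔ Ideal.span {z}).height := by
    rw [← two_add_one_eq_three]
    exact (add_le_add_left (two_le_height_span_pair hx hy) 1).trans
      (height_add_one_le_height_sup_span_singleton hz)
  have h2 : ((3 : ℕ∞) : WithBot ℕ∞) ≤ (2 : ℕ∞) :=
    (WithBot.coe_le_coe.2 h3).trans ((Ideal.height_le_ringKrullDim_of_ne_top hne).trans hdim)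
  exact absurd (WithBot.coe_le_coe.1 h2) (by decide)

theorem exists_isWeaklyRegular_maximalIdeal_mem_minimalPrimes [IsNoetherianRing R]
    [IsIntegrallyClosed R] [IsLocalRing R] (hdim : ringKrullDim R ≤ 2) :
    ∃ rs : List R, IsWeaklyRegular R rs ∧ maximalIdeal R ∈ (Ideal.ofList rs).minimalPrimes := by
  obtain hbot | hbot := eq_or_ne (maximalIdeal R) ⊥
  · exact ⟨[], IsWeaklyRegular.nil R R, by
      simp [Ideal.ofList_nil, hbot, Ideal.minimalPrimes_eq_subsingleton_self]⟩
  obtain ⟨x, hx, hx0⟩ := Submodule.exists_mem_ne_zero_of_ne_bot hbot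
  by_cases hmin : maximalIdeal R ∈ (Ideal.span {x}).minimalPrimes
  · exact ⟨[x], isWeaklyRegular_singleton_of_ne_zero hx0, by rwa [Ideal.ofList_singleton]⟩
  obtain ⟨y, hy, hyass⟩ := exists_mem_forall_notMem (Q := maximalIdeal R)
    (associatedPrimes.finite R (R ⧸ Ideal.span {x})) (fun P hP => hP.isPrime) fun P hP hle =>
      hmin <| (maximalIdeal.isMaximal R).eq_of_le hP.isPrime.ne_top hle ▸
        mem_minimalPrimes_span_singleton hx0 hP
  have hymin : ∀ P ∈ (Ideal.span {x}).minimalPrimes, y ∉ P := fun P hP => hyass P <| by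
    have := Module.associatedPrimes.minimalPrimes_annihilator_subset_associatedPrimes R
      (R ⧸ Ideal.span {x})
    rw [Ideal.annihilator_quotient] at this
    exact this hP
  refine ⟨[x, y], isWeaklyRegular_pair hx0 (isSMulRegular_iff_forall_notMem.2 hyass), ?_⟩
  rw [Ideal.ofList_cons, Ideal.ofList_singleton, ← Ideal.span_insert]
  have hle : Ideal.span {x, y} ≤ maximalIdeal R :=
    Ideal.span_le.2 (Set.insert_subset hx (Set.singleton_subset_iff.2 hy))
  have hheight : (maximalIdeal R).height ≤ 2 := WithBot.coe_le_coe.1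
    (Ideal.height_le_ringKrullDim_of_isPrime.trans hdim)
  exact Ideal.mem_minimalPrimes_of_height_le hle
    (hheight.trans (two_le_height_span_pair hx0 hymin))

end Height

section Localization

variable {R S : Type*} [CommRing R] [CommRing S]

/- Inverting `R ∖ P` in `S` gives back `R_P`, a local ring, which is therefore the localization of
`S` at the preimage of its maximal ideal. -/
theorem exists_isPrime_localization_ringEquiv {θ : R →+* S} (hθ : Function.Injective θ)
    (P : Ideal R) [P.IsPrime] (h : ∀ s, ∃ m ∉ P, ∃ r, θ m * s = θ r) :
    ∃ (P' : Ideal S) (_ : P'.IsPrime), P'.comap θ = P ∧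
      Nonempty (Localization.AtPrime P' ≃+* Localization.AtPrime P) := by
  let M : Submonoid S := P.primeCompl.map θ
  let φ : Localization.AtPrime P →+* Localization M :=
    IsLocalization.map _ θ P.primeCompl.le_comap_map
  have hφ : Function.Bijective φ := by
    refine ⟨IsLocalization.map_injective_of_injective _ _ _ hθ,
      fun z => ?_⟩
    obtain ⟨⟨s, t, m, hm, rfl⟩, rfl⟩ := IsLocalization.mk'_surjective M z
    obtain ⟨m', hm', r, hr⟩ := h s
    refine ⟨IsLocalization.mk' _ r (⟨m', hm'⟩ * ⟨m, hm⟩ : P.primeCompl), ?_⟩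
    rw [IsLocalization.map_mk', IsLocalization.mk'_eq_iff_eq]
    simp only [Submonoid.coe_mul, ← hr, map_mul]
    ring
  let e := RingEquiv.ofBijective φ hφ
  have := e.isLocalRing
  let Q := maximalIdeal (Localization M)
  have hQ : IsLocalization.AtPrime (Localization.AtPrime Q) (Q.under S) :=
    IsLocalization.isLocalization_isLocalization_atPrime_isLocalization M _ Q
  have hunits : Q.primeCompl ≤ IsUnit.submonoid (Localization M) := fun x hx => by
    simpa [Q, Ideal.primeCompl, IsUnit.mem_submonoid_iff] using hx
  refine ⟨Q.under S, inferInstance, ?_, ⟨?_⟩⟩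
  · have : IsLocalHom φ := ⟨fun _ => (MulEquiv.isUnit_map e).1⟩
    have hmax : Q.comap φ = maximalIdeal (Localization.AtPrime P) :=
      ((local_hom_TFAE φ).out 0 4).1 this
    rw [← Localization.AtPrime.under_maximalIdeal (I := P), Ideal.under, Ideal.under, ← hmax,
      Ideal.comap_comap, Ideal.comap_comap, IsLocalization.map_comp]
  · let e₁ := IsLocalization.algEquiv (Q.under S).primeCompl
      (Localization.AtPrime (Q.under S)) (Localization.AtPrime Q)
    let e₂ := IsLocalization.atUnits _ (S := Localization.AtPrime Q) Q.primeCompl hunits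
    exact e₁.toRingEquiv.trans (e₂.symm.toRingEquiv.trans e.symm)

end Localization

section Polynomial

variable {S : Type*} [CommRing S]

theorem isSMulRegular_quotient_map_C_of_monic {g : S[X]} (hg : g.Monic) (i : Ideal S) :
    IsSMulRegular (S[X] ⧸ i.map C) g := by
  have hker : i.map C = RingHom.ker (mapRingHom (Ideal.Quotient.mk i)) := by
    rw [ker_mapRingHom, Ideal.mk_ker]
  simp only [isSMulRegular_quotient_iff, hker, RingHom.mem_ker, map_mul]
  exact fun p hp => ((hg.map (Ideal.Quotient.mk i)).mul_right_eq_zero_iff).1 hp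

theorem mem_minimalPrimes_map_C_sup {P K : Ideal S[X]} [P.IsPrime] {i : Ideal S}
    (hmin : P.comap C ∈ i.minimalPrimes) (hP : P = (P.comap C).map C ⊔ K) :
    P ∈ (i.map C ⊔ K).minimalPrimes := by
  have hK : K ≤ P := le_sup_right.trans_eq hP.symm
  refine ⟨⟨inferInstance, sup_le (Ideal.map_le_iff_le_comap.2 hmin.1.2) hK⟩, fun Q hQ hQP => ?_⟩
  have hle : P.comap C ≤ Q.comap C :=
    hmin.2 ⟨hQ.1.comap C, Ideal.map_le_iff_le_comap.1 (le_sup_left.trans hQ.2)⟩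
      (Ideal.comap_mono hQP)
  rw [hP]
  exact sup_le (Ideal.map_le_iff_le_comap.2 hle) (le_sup_right.trans hQ.2)

theorem isCohenMacaulayLocalRing_atPrime_of_comap_C_isMaximal [IsNoetherianRing S]
    {P : Ideal S[X]} [P.IsPrime] (hmax : (P.comap C).IsMaximal) {rs : List S}
    (hrs : IsWeaklyRegular S rs) (hmin : P.comap C ∈ (Ideal.ofList rs).minimalPrimes) :
    IsCohenMacaulayLocalRing (Localization.AtPrime P) := by
  have hrsX : IsWeaklyRegular S[X] (rs.map C) := hrs.of_flat
  have hmap : (Ideal.ofList rs).map C = Ideal.ofList (rs.map (C : S →+* S[X])) :=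
    Ideal.map_ofList C rs
  by_cases hP : P = (P.comap C).map C
  · refine isCohenMacaulayLocalRing_atPrime hrsX ?_
    rw [← hmap, ← sup_bot_eq (Ideal.map C _)]
    exact mem_minimalPrimes_map_C_sup hmin (by rwa [sup_bot_eq])
  · obtain ⟨g, hg, hPg⟩ := exists_monic_span_sup_map_eq S P hmax hP
    refine isCohenMacaulayLocalRing_atPrime (rs := rs.map C ++ [g])
      (isWeaklyRegular_append_singleton_iff.2 ⟨hrsX, ?_⟩) ?_
    · rw [← hmap]
      exact isSMulRegular_quotient_map_C_of_monic hg _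
    · rw [Ideal.ofList_append, Ideal.ofList_singleton, ← hmap]
      exact mem_minimalPrimes_map_C_sup hmin hPg

variable [IsDomain S] [IsNoetherianRing S] [IsIntegrallyClosed S]

theorem isCohenMacaulayRing_polynomial (hdim : ringKrullDim S ≤ 2) : IsCohenMacaulayRing S[X] := by
  refine ⟨inferInstance, fun P hP => ?_⟩
  let p := P.comap (C : S →+* S[X])
  let L := Localization.AtPrime p
  have : IsNoetherianRing L := IsLocalization.isNoetherianRing p.primeCompl _ inferInstance
  have : IsIntegrallyClosed L :=
    isIntegrallyClosed_of_isLocalization _ p.primeCompl p.primeCompl_le_nonZeroDivisors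
  have hinj : Function.Injective (algebraMap S L) :=
    IsLocalization.injective _ p.primeCompl_le_nonZeroDivisors
  obtain ⟨P', hP', hcomap, ⟨e⟩⟩ := exists_isPrime_localization_ringEquiv
    (θ := mapRingHom (algebraMap S L)) (map_injective _ hinj) P fun s => by
      obtain ⟨b, hb, hbs⟩ := IsLocalization.integerNormalization_spec p.primeCompl s
      refine ⟨C b, hb, IsLocalization.integerNormalization p.primeCompl s, ?_⟩
      rw [coe_mapRingHom, hbs, map_C, ← smul_eq_C_mul, algebraMap_smul]
  have hmax : P'.comap C = maximalIdeal L := by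
    refine Localization.AtPrime.eq_maximalIdeal_iff_under_eq.1 ?_
    rw [Ideal.under, Ideal.comap_comap, ← mapRingHom_comp_C, ← Ideal.comap_comap, hcomap]
  have hdimL : ringKrullDim L ≤ 2 := by
    rw [IsLocalization.AtPrime.ringKrullDim_eq_height p L]
    exact (Ideal.height_le_ringKrullDim_of_ne_top Ideal.IsPrime.ne_top').trans hdim
  obtain ⟨rs, hrs, hmin⟩ := exists_isWeaklyRegular_maximalIdeal_mem_minimalPrimes hdimL
  exact (isCohenMacaulayLocalRing_atPrime_of_comap_C_isMaximal (hmax ▸ maximalIdeal.isMaximal L)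
    hrs (hmax ▸ hmin)).of_ringEquiv e

theorem isCohenMacaulayLocalRing_atPrime_of_injective_polynomial {R : Type*} [CommRing R]
    (hdim : ringKrullDim S ≤ 2) {θ : R →+* S[X]} (hθ : Function.Injective θ) (P : Ideal R)
    [P.IsPrime] (h : ∀ s, ∃ m ∉ P, ∃ r, θ m * s = θ r) :
    IsCohenMacaulayLocalRing (Localization.AtPrime P) := by
  obtain ⟨P', hP', -, ⟨e⟩⟩ := exists_isPrime_localization_ringEquiv hθ P h
  exact ((isCohenMacaulayRing_polynomial hdim).2 P' hP').of_ringEquiv e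

end Polynomial

section IntegralDependence

open Finset.HasAntidiagonal (antidiagonal mem_antidiagonal)

variable {A R S : Type*} [CommRing A] [CommRing R] [CommRing S] [Algebra R S]

theorem isIntegral_iff_exists_sum_antidiagonal {x : S} :
    IsIntegral R x ↔ ∃ (n : ℕ) (c : ℕ → R), c 0 = 1 ∧
      ∑ ij ∈ antidiagonal n, algebraMap R S (c ij.1) * x ^ ij.2 = 0 := by
  refine ⟨fun ⟨p, hp, hpx⟩ => ⟨p.natDegree, fun i => p.coeff (p.natDegree - i), ?_, ?_⟩, ?_⟩
  · exact hp.coeff_natDegree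
  · rw [eval₂_eq_sum_range, ← Finset.Nat.sum_antidiagonal_eq_sum_range_succ_mk
      (fun ij => algebraMap R S (p.coeff ij.1) * x ^ ij.1),
      ← Finset.Nat.sum_antidiagonal_swap] at hpx
    rw [← hpx]
    refine Finset.sum_congr rfl fun ij hij => ?_
    simp only [← mem_antidiagonal.1 hij, add_tsub_cancel_left, Prod.fst_swap]
  · rintro ⟨n, c, hc, h⟩
    cases n with
    | zero =>
      have : Subsingleton S := subsingleton_of_zero_eq_one (by simpa [hc] using h.symm)
      exact Subsingleton.elim 0 x ▸ isIntegral_zero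
    | succ n =>
      refine ⟨X ^ (n + 1) + ∑ ij ∈ antidiagonal n, C (c (ij.1 + 1)) * X ^ ij.2,
        monic_X_pow_add <| mem_degreeLT.1 <| sum_mem fun ij hij => mem_degreeLT.2 ?_, ?_⟩
      · refine (degree_C_mul_X_pow_le _ _).trans_lt (Nat.cast_lt.2 ?_)
        exact Nat.lt_succ_of_le (Finset.HasAntidiagonal.antidiagonal.snd_le hij)
      · simpa [Finset.Nat.antidiagonal_succ, hc, eval₂_finsetSum] using h

theorem isIntegralOverIdeal_iff_exists_sum_antidiagonal {I : Ideal A} {x : A} :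
    IsIntegralOverIdeal I x ↔ ∃ (n : ℕ) (c : ℕ → A), c 0 = 1 ∧ (∀ i ≤ n, c i ∈ I ^ i) ∧
      ∑ ij ∈ antidiagonal n, c ij.1 * x ^ ij.2 = 0 := by
  have hsum (n : ℕ) (c : ℕ → A) (hc : c 0 = 1) : ∑ ij ∈ antidiagonal n, c ij.1 * x ^ ij.2 =
      x ^ n + ∑ i ∈ Finset.Icc 1 n, c i * x ^ (n - i) := by
    rw [Finset.Nat.sum_antidiagonal_eq_sum_range_succ_mk, Finset.range_eq_Ico,
      Finset.sum_eq_sum_Ico_succ_bot n.succ_pos, hc, one_mul, tsub_zero]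
    rfl
  constructor
  · rintro ⟨n, -, c, hc, h⟩
    refine ⟨n, Function.update c 0 1, Function.update_self .., fun i hi => ?_, ?_⟩
    · rcases i.eq_zero_or_pos with rfl | hi0
      · simp
      · simpa [hi0.ne'] using hc i hi0 hi
    · rw [hsum _ _ (Function.update_self ..), ← h]
      congr 1
      refine Finset.sum_congr rfl fun i hi => ?_
      rw [Function.update_of_ne (Nat.pos_iff_ne_zero.1 (Finset.mem_Icc.1 hi).1)]
  · rintro ⟨n, c, hc0, hc, h⟩
    rcases n.eq_zero_or_pos with rfl | hn
    · have : Subsingleton A := subsingleton_of_zero_eq_one (by simpa [hc0] using h.symm)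
      exact ⟨1, one_pos, 0, by simp, Subsingleton.elim _ _⟩
    · exact ⟨n, hn, c, fun i _ => hc i, hsum n c hc0 ▸ h⟩

theorem isIntegralOverIdeal_of_mem {I : Ideal A} {x : A} (hx : x ∈ I) : IsIntegralOverIdeal I x :=
  ⟨1, one_pos, fun _ => -x, fun i h1 hi => by simpa [le_antisymm hi h1] using hx, by simp⟩

theorem IsIntegralOverIdeal.mul_map {I : Ideal A} {I' : Ideal R} {z : A}
    (hz : IsIntegralOverIdeal I z) (ψ : A →+* R) {u : R} (hu : Ideal.span {u} * I.map ψ ≤ I') :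
    IsIntegralOverIdeal I' (u * ψ z) := by
  obtain ⟨n, c, hc0, hc, h⟩ := isIntegralOverIdeal_iff_exists_sum_antidiagonal.1 hz
  refine isIntegralOverIdeal_iff_exists_sum_antidiagonal.2
    ⟨n, fun i => u ^ i * ψ (c i), by simp [hc0], fun i hi => Ideal.pow_right_mono hu i ?_, ?_⟩
  · rw [mul_pow, Ideal.span_singleton_pow, ← Ideal.map_pow]
    exact Ideal.mul_mem_mul (Ideal.mem_span_singleton_self _) (Ideal.mem_map_of_mem ψ (hc i hi))
  · rw [← mul_zero (u ^ n), ← map_zero ψ, ← h, map_sum, Finset.mul_sum]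
    refine Finset.sum_congr rfl fun ij hij => ?_
    rw [← mem_antidiagonal.1 hij, map_mul, map_pow]
    ring

variable [IsDomain R] [IsIntegrallyClosed R]

theorem idealIsIntegrallyClosed_span_singleton {x : R} (hx : x ≠ 0) :
    IdealIsIntegrallyClosed (Ideal.span {x}) := by
  intro y hy
  obtain ⟨n, c, hc0, hc, h⟩ := isIntegralOverIdeal_iff_exists_sum_antidiagonal.1 hy
  simp only [Ideal.span_singleton_pow, Ideal.mem_span_singleton] at hc ⊢
  choose! d hd using hc
  have hx' : algebraMap R (FractionRing R) x ≠ 0 := by simpa using hx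
  have hint : IsIntegral R (algebraMap R (FractionRing R) y / algebraMap R (FractionRing R) x) := by
    refine isIntegral_iff_exists_sum_antidiagonal.2
      ⟨n, d, by simpa [hc0] using (hd 0 n.zero_le).symm, mul_left_cancel₀ (pow_ne_zero n hx') ?_⟩
    rw [mul_zero, ← map_zero (algebraMap R (FractionRing R)), ← h, map_sum, Finset.mul_sum]
    refine Finset.sum_congr rfl fun ij hij => ?_
    rw [hd _ (Finset.HasAntidiagonal.antidiagonal.fst_le hij), ← mem_antidiagonal.1 hij]
    simp only [map_mul, map_pow, div_pow, pow_add]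
    field_simp
  obtain ⟨q, hq⟩ := IsIntegrallyClosed.isIntegral_iff.1 hint
  refine ⟨q, IsFractionRing.injective R (FractionRing R) ?_⟩
  rw [map_mul, hq, mul_div_cancel₀ _ hx']

theorem exists_algebraMap_eq_of_isIntegral_of_mul_eq [IsDomain S] [FaithfulSMul R S] {s : S}
    (hs : IsIntegral R s) {r r' : R} (hr : r ≠ 0)
    (h : algebraMap R S r * s = algebraMap R S r') : ∃ y, algebraMap R S y = s := by
  have hinj := FaithfulSMul.algebraMap_injective R S
  obtain ⟨n, c, hc0, hc⟩ := isIntegral_iff_exists_sum_antidiagonal.1 hs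
  have hint : IsIntegralOverIdeal (Ideal.span {r}) r' := by
    refine isIntegralOverIdeal_iff_exists_sum_antidiagonal.2
      ⟨n, fun i => r ^ i * c i, by simp [hc0], fun i _ => ?_, hinj ?_⟩
    · rw [Ideal.span_singleton_pow]
      exact Ideal.mul_mem_right _ _ (Ideal.mem_span_singleton_self _)
    · rw [map_zero, ← mul_zero (algebraMap R S r ^ n), ← hc, map_sum, Finset.mul_sum]
      refine Finset.sum_congr rfl fun ij hij => ?_
      rw [← mem_antidiagonal.1 hij, map_mul, map_mul, map_pow, map_pow, ← h]
      ring
  obtain ⟨y, rfl⟩ := Ideal.mem_span_singleton.1 (idealIsIntegrallyClosed_span_singleton hr _ hint)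
  refine ⟨y, mul_left_cancel₀ (a := algebraMap R S r) ?_ (by rw [h, map_mul])⟩
  rwa [Ne, map_eq_zero_iff _ hinj]

end IntegralDependence

section ReesNormal

open Finset.HasAntidiagonal (antidiagonal mem_antidiagonal)

variable {A : Type*} [CommRing A] {K : Ideal A}

/-- The homogeneous element `x tⁿ` of the Rees algebra `A[Kt]`, for `x ∈ Kⁿ`. -/
noncomputable def reesMonomial {n : ℕ} {x : A} (hx : x ∈ K ^ n) : reesAlgebra K :=
  ⟨monomial n x, reesAlgebra.monomial_mem.2 hx⟩

@[simp]
theorem coe_reesMonomial {n : ℕ} {x : A} (hx : x ∈ K ^ n) :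
    (reesMonomial hx : A[X]) = monomial n x :=
  rfl

theorem coeff_mem_of_mem_reesAlgebra (s : reesAlgebra K) (n : ℕ) : (s : A[X]).coeff n ∈ K ^ n :=
  (mem_reesAlgebra_iff K _).1 s.2 n

theorem isIntegral_monomial_iff {d : ℕ} {x : A} :
    IsIntegral (reesAlgebra K) (monomial d x : A[X]) ↔ IsIntegralOverIdeal (K ^ d) x := by
  rw [isIntegral_iff_exists_sum_antidiagonal, isIntegralOverIdeal_iff_exists_sum_antidiagonal]
  constructor
  · rintro ⟨n, c, hc0, hc⟩
    refine ⟨n, fun i => (c i : A[X]).coeff (d * i), by simp [hc0], fun i _ => ?_, ?_⟩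
    · rw [← pow_mul]
      exact coeff_mem_of_mem_reesAlgebra _ _
    · rw [← coeff_zero (d * n), ← hc, finsetSum_coeff]
      refine Finset.sum_congr rfl fun ij hij => ?_
      rw [← mem_antidiagonal.1 hij, mul_add, monomial_pow, coeff_mul_monomial]
      rfl
  · rintro ⟨n, c, hc0, hc, h⟩
    choose! q hq using fun i hi => Exists.intro (p := fun q : reesAlgebra K =>
      (q : A[X]) = monomial (d * i) (c i)) (reesMonomial (by rw [pow_mul]; exact hc i hi)) rfl
    refine ⟨n, q, Subtype.ext (by simp [hq, hc0]), ?_⟩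
    rw [← map_zero (monomial (d * n)), ← h, map_sum]
    refine Finset.sum_congr rfl fun ij hij => ?_
    rw [Subalgebra.algebraMap_apply, hq _ (Finset.HasAntidiagonal.antidiagonal.fst_le hij),
      monomial_pow, monomial_mul_monomial, ← mul_add, mem_antidiagonal.1 hij]

theorem algebraMap_reesAlgebra_ne_zero {x : A} (hx : x ≠ 0) :
    algebraMap A (reesAlgebra K) x ≠ 0 :=
  fun h => hx (C_eq_zero.1 (congrArg Subtype.val h))

theorem C_pow_mul_mem_reesAlgebra {x : A} (hx : x ∈ K) (s : A[X]) :
    C (x ^ s.natDegree) * s ∈ reesAlgebra K := by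
  refine (mem_reesAlgebra_iff K _).2 fun i => ?_
  rw [coeff_C_mul]
  rcases le_or_gt i s.natDegree with hi | hi
  · exact Ideal.mul_mem_right _ _ (Ideal.pow_le_pow_right hi (Ideal.pow_mem_pow hx _))
  · rw [coeff_eq_zero_of_natDegree_lt hi, mul_zero]
    exact zero_mem _

variable [IsDomain A]

theorem isAlmostIntegral_monomial_leadingCoeff {s : A[X]}
    (hs : IsAlmostIntegral (reesAlgebra K) s) :
    IsAlmostIntegral (reesAlgebra K) (monomial s.natDegree s.leadingCoeff) := by
  obtain ⟨r, hr, hrs⟩ := hs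
  refine ⟨reesMonomial (coeff_mem_of_mem_reesAlgebra r (r : A[X]).natDegree),
    mem_nonZeroDivisors_of_ne_zero fun h0 => ?_, fun n => ?_⟩
  · have := congrArg Subtype.val h0
    simp only [coe_reesMonomial, coeff_natDegree, ZeroMemClass.coe_zero, monomial_eq_zero_iff,
      leadingCoeff_eq_zero] at this
    exact nonZeroDivisors.ne_zero hr (Subtype.ext this)
  · obtain ⟨t, ht : (t : A[X]) = r * s ^ n⟩ := hrs n
    have hcoeff : (t : A[X]).coeff (t : A[X]).natDegree =
        (r : A[X]).leadingCoeff * s.leadingCoeff ^ n := by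
      rw [coeff_natDegree, ht, leadingCoeff_mul, leadingCoeff_pow]
    by_cases ht0 : (t : A[X]) = 0
    · refine ⟨0, ?_⟩
      rw [ht0, coeff_zero] at hcoeff
      change 0 = monomial _ (r : A[X]).leadingCoeff * _
      rw [monomial_pow, monomial_mul_monomial, ← hcoeff, map_zero]
    · have hdeg : (t : A[X]).natDegree = (r : A[X]).natDegree + s.natDegree * n := by
        rw [ht] at ht0 ⊢
        rw [natDegree_mul (left_ne_zero_of_mul ht0) (right_ne_zero_of_mul ht0), natDegree_pow,
          mul_comm n]
      refine ⟨reesMonomial (coeff_mem_of_mem_reesAlgebra t (t : A[X]).natDegree), ?_⟩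
      change monomial _ _ = monomial _ (r : A[X]).leadingCoeff * _
      rw [monomial_pow, monomial_mul_monomial, hcoeff, hdeg]

variable [IsNoetherianRing A]

theorem isIntegral_monomial_leadingCoeff (hK : K ≠ ⊥) {s : A[X]}
    (hs : IsIntegral (reesAlgebra K) s) :
    IsIntegral (reesAlgebra K) (monomial s.natDegree s.leadingCoeff) := by
  obtain ⟨x, hxK, hx0⟩ := Submodule.exists_mem_ne_zero_of_ne_bot hK
  have hne := algebraMap_reesAlgebra_ne_zero (K := K) (pow_ne_zero s.natDegree hx0)
  exact (isAlmostIntegral_monomial_leadingCoeff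
    (hs.isAlmostIntegral_of_exists_smul_mem_range ⟨_, mem_nonZeroDivisors_of_ne_zero hne,
      ⟨_, C_pow_mul_mem_reesAlgebra hxK s⟩, rfl⟩)).isIntegral

theorem mem_reesAlgebra_of_isIntegral (hK : K ≠ ⊥) (h : ∀ n, IdealIsIntegrallyClosed (K ^ n))
    {s : A[X]} (hs : IsIntegral (reesAlgebra K) s) : s ∈ reesAlgebra K := by
  induction hd : s.natDegree using Nat.strong_induction_on generalizing s with
  | _ d ih =>
    have hlead := isIntegral_monomial_leadingCoeff hK hs
    have hmem := reesAlgebra.monomial_mem.2 (h _ _ (isIntegral_monomial_iff.1 hlead))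
    rw [← eraseLead_add_monomial_natDegree_leadingCoeff s]
    refine add_mem ?_ hmem
    rcases d.eq_zero_or_pos with rfl | hd0
    · rw [eq_C_of_natDegree_eq_zero hd, eraseLead_C]
      exact zero_mem _
    · refine ih _ ((eraseLead_natDegree_le s).trans_lt (by lia)) ?_ rfl
      rw [← self_sub_monomial_natDegree_leadingCoeff]
      exact hs.sub hlead

theorem isIntegrallyClosed_reesAlgebra_iff [IsIntegrallyClosed A] (hK : K ≠ ⊥) :
    IsIntegrallyClosed (reesAlgebra K) ↔ ∀ n, IdealIsIntegrallyClosed (K ^ n) := by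
  refine ⟨fun _ n z hz => ?_, fun h => ?_⟩
  · obtain ⟨x, hxK, hx0⟩ := Submodule.exists_mem_ne_zero_of_ne_bot hK
    obtain ⟨s, hs⟩ := exists_algebraMap_eq_of_isIntegral_of_mul_eq (isIntegral_monomial_iff.2 hz)
      (algebraMap_reesAlgebra_ne_zero (pow_ne_zero _ hx0))
      (r' := ⟨_, C_pow_mul_mem_reesAlgebra hxK (monomial n z)⟩) rfl
    have hcoeff := coeff_mem_of_mem_reesAlgebra s n
    rwa [← Subalgebra.algebraMap_apply, hs, coeff_monomial_same] at hcoeff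
  · have : IsIntegrallyClosedIn (reesAlgebra K) A[X] := isIntegrallyClosedIn_iff.2
      ⟨Subtype.val_injective, fun hs => ⟨⟨_, mem_reesAlgebra_of_isIntegral hK h hs⟩, rfl⟩⟩
    exact IsIntegrallyClosed.of_isIntegrallyClosed_of_isIntegrallyClosedIn _ A[X]

end ReesNormal

section FractionField

variable {A : Type*} [CommRing A] {F : Type*} [Field F] [Algebra A F] [IsFractionRing A F]

theorem isFractionRing_subalgebra (T : Subalgebra A F) : IsFractionRing T F := by
  refine IsFractionRing.of_field T F fun z => ?_
  obtain ⟨x, y, -, rfl⟩ := IsFractionRing.div_surjective (A := A) z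
  exact ⟨algebraMap A T x, algebraMap A T y, rfl⟩

variable [IsNoetherianRing A]

theorem ringKrullDim_range_aeval_le [IsDomain A] (z : F) :
    ringKrullDim (aeval z : A[X] →ₐ[A] F).range ≤ ringKrullDim A := by
  obtain ⟨x, y, hy, rfl⟩ := IsFractionRing.div_surjective (A := A) z
  have hy' : algebraMap A F y ≠ 0 := by simpa using nonZeroDivisors.ne_zero hy
  have hne : C y * X - C x ≠ 0 := fun h => nonZeroDivisors.ne_zero hy <| by
    simpa [coeff_C] using congrArg (coeff · 1) h
  have hle := ringKrullDim_succ_le_of_surjective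
    (aeval (algebraMap A F x / algebraMap A F y)).rangeRestrict.toRingHom
    (AlgHom.rangeRestrict_surjective _) (mem_nonZeroDivisors_of_ne_zero hne)
    (Subtype.ext (by simp [mul_div_cancel₀ _ hy']))
  rw [ringKrullDim_of_isNoetherianRing] at hle
  exact ENat.WithBot.add_le_add_one_right_iff.1 hle

theorem ringKrullDim_subalgebra_le {T : Subalgebra A F} (hT : T.FG) :
    ringKrullDim T ≤ ringKrullDim A := by
  classical
  obtain ⟨s, rfl⟩ := hT
  induction s using Finset.induction_on with
  | empty =>
    rw [Finset.coe_empty, Algebra.adjoin_empty]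
    refine ringKrullDim_le_of_surjective (algebraMap A (⊥ : Subalgebra A F)) fun ⟨x, hx⟩ => ?_
    obtain ⟨r, hr⟩ := Algebra.mem_bot.1 hx
    exact ⟨r, Subtype.ext hr⟩
  | insert y s _ ih =>
    let T := Algebra.adjoin A (s : Set F)
    have := isFractionRing_subalgebra T
    have : IsNoetherianRing T := isNoetherianRing_of_fg (Subalgebra.fg_adjoin_finset s)
    rw [Finset.coe_insert, Set.insert_eq, Set.union_comm, Algebra.adjoin_union_eq_adjoin_adjoin,
      Algebra.adjoin_singleton_eq_range_aeval]
    exact (ringKrullDim_range_aeval_le (A := T) y).trans ih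

end FractionField

section BlowupChart

variable {A : Type*} [CommRing A] {F : Type*} [Field F] [Algebra A F] {I L : Ideal A} {a : A}

variable (F) in
/-- The affine chart `A[I/a]` of the blowup of `I`, as a subalgebra of a field `F` containing `A`:
the image of the Rees algebra `A[It]` under `t ↦ a⁻¹`. -/
noncomputable def blowupChart (I : Ideal A) (a : A) : Subalgebra A F :=
  (reesAlgebra I).map (aeval (algebraMap A F a)⁻¹)

theorem exists_mul_algebraMap_blowupChart_eq (ha : algebraMap A F a ≠ 0) {x : A} (hx : x ∈ I) :
    ∃ p : blowupChart F I a,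
      p * algebraMap A (blowupChart F I a) a = algebraMap A (blowupChart F I a) x := by
  refine ⟨⟨_, monomial 1 x, reesAlgebra.monomial_mem.2 (by rwa [pow_one]), rfl⟩, Subtype.ext ?_⟩
  simp [aeval_monomial, ha]

theorem blowupChart_fg [IsNoetherianRing A] : (blowupChart F I a).FG :=
  (isNoetherian_def.1 inferInstance I |> reesAlgebra.fg).map _

theorem eventually_exists_mem_mul_pow (haI : a ∈ I) {x : F}
    (h : ∃ N, ∃ y ∈ L * I ^ N, x * algebraMap A F a ^ N = algebraMap A F y) :
    ∀ᶠ N in atTop, ∃ y ∈ L * I ^ N, x * algebraMap A F a ^ N = algebraMap A F y := by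
  obtain ⟨N, y, hy, hxy⟩ := h
  filter_upwards [eventually_ge_atTop N] with M hM
  obtain ⟨k, rfl⟩ := Nat.exists_eq_add_of_le hM
  refine ⟨y * a ^ k, ?_, by rw [pow_add, ← mul_assoc, hxy, map_mul, map_pow]⟩
  rw [pow_add, ← mul_assoc]
  exact Ideal.mul_mem_mul hy (Ideal.pow_mem_pow haI k)

theorem aeval_inv_mul_pow (ha : algebraMap A F a ≠ 0) (p : A[X]) {N : ℕ} (hN : p.natDegree ≤ N) :
    aeval (algebraMap A F a)⁻¹ p * algebraMap A F a ^ N =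
      algebraMap A F (∑ i ∈ Finset.range (N + 1), p.coeff i * a ^ (N - i)) := by
  rw [aeval_eq_sum_range' (Nat.lt_succ_of_le hN), Finset.sum_mul, map_sum]
  refine Finset.sum_congr rfl fun i hi => ?_
  obtain ⟨k, rfl⟩ := Nat.exists_eq_add_of_le (Finset.mem_range_succ_iff.1 hi)
  rw [add_tsub_cancel_left, pow_add, Algebra.smul_def, map_mul, map_pow, inv_pow]
  field_simp

theorem mem_blowupChart_iff (haI : a ∈ I) (ha : algebraMap A F a ≠ 0) {x : F} :
    x ∈ blowupChart F I a ↔ ∃ N, ∃ y ∈ I ^ N, x * algebraMap A F a ^ N = algebraMap A F y := by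
  constructor
  · rintro ⟨p, hp, rfl⟩
    refine ⟨p.natDegree, _, ?_, aeval_inv_mul_pow ha p le_rfl⟩
    refine Ideal.sum_mem _ fun i hi => ?_
    rw [← Nat.add_sub_cancel' (Finset.mem_range_succ_iff.1 hi), pow_add, Nat.add_sub_cancel']
    · exact Ideal.mul_mem_mul (hp i) (Ideal.pow_mem_pow haI _)
    · exact Finset.mem_range_succ_iff.1 hi
  · rintro ⟨N, y, hy, h⟩
    refine ⟨monomial N y, reesAlgebra.monomial_mem.2 hy, ?_⟩
    simp [aeval_monomial, ← h, ha]

theorem exists_mem_mul_pow_of_mem_map (haI : a ∈ I) (ha : algebraMap A F a ≠ 0)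
    {z : blowupChart F I a} (hz : z ∈ L.map (algebraMap A (blowupChart F I a))) :
    ∃ N, ∃ y ∈ L * I ^ N, (z : F) * algebraMap A F a ^ N = algebraMap A F y := by
  induction hz using Submodule.span_induction with
  | mem z hz =>
    obtain ⟨y, hy, rfl⟩ := hz
    exact ⟨0, y, by simpa using hy, by simp⟩
  | zero => exact ⟨0, 0, zero_mem _, by simp⟩
  | add z w _ _ hz hw =>
    obtain ⟨N, ⟨y, hy, hzy⟩, ⟨v, hv, hwv⟩⟩ :=
      ((eventually_exists_mem_mul_pow haI hz).and (eventually_exists_mem_mul_pow haI hw)).exists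
    exact ⟨N, y + v, add_mem hy hv, by rw [Subalgebra.coe_add, add_mul, hzy, hwv, map_add]⟩
  | smul c z _ hz =>
    obtain ⟨N, y, hy, hcy⟩ := (mem_blowupChart_iff haI ha).1 c.2
    obtain ⟨M, v, hv, hzv⟩ := hz
    refine ⟨M + N, v * y, ?_, ?_⟩
    · rw [pow_add, ← mul_assoc]
      exact Ideal.mul_mem_mul hv hy
    · rw [map_mul, ← hcy, ← hzv, smul_eq_mul, Subalgebra.coe_mul]
      ring

theorem exists_mem_pow_mul_pow_of_coe_zero_eq_one [IsDomain A] [FaithfulSMul A F] (haI : a ∈ I)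
    (ha : a ≠ 0) {c : ℕ → blowupChart F I a} (hc : c 0 = 1) (n : ℕ) :
    ∃ N, ∃ d : ℕ → A, d 0 = 1 ∧ ∀ i ≤ n, d i ∈ (I ^ N) ^ i ∧
      algebraMap A F (d i) = c i * (algebraMap A F a ^ N) ^ i := by
  have hα : algebraMap A F a ≠ 0 := by simpa using ha
  obtain ⟨N, hN⟩ : ∃ N, ∀ i ∈ Finset.range (n + 1), ∃ y ∈ (⊤ : Ideal A) * I ^ N,
      (c i : F) * algebraMap A F a ^ N = algebraMap A F y :=
    ((eventually_all_finset _).2 fun i _ => eventually_exists_mem_mul_pow haI (by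
      simpa using (mem_blowupChart_iff haI hα).1 (c i).2)).exists
  choose! y hy hcy using hN
  refine ⟨N, fun | 0 => 1 | i + 1 => (a ^ N) ^ i * y (i + 1), rfl, fun i hi => ?_⟩
  rcases i with _ | i
  · simp [hc]
  · have hi' := Finset.mem_range_succ_iff.2 hi
    refine ⟨?_, by rw [map_mul, ← hcy _ hi', map_pow, map_pow]; ring⟩
    rw [pow_succ]
    exact Ideal.mul_mem_mul (Ideal.pow_mem_pow (Ideal.pow_mem_pow haI N) i)
      (by simpa using hy _ hi')

theorem exists_pow_mem_mul_pow_of_mem_map [FaithfulSMul A F] (haI : a ∈ I) (ha : a ≠ 0)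
    (h : algebraMap A (blowupChart F I a) a ∈ L.map (algebraMap A (blowupChart F I a))) :
    ∃ N, a ^ (N + 1) ∈ L * I ^ N := by
  obtain ⟨N, y, hy, hay⟩ := exists_mem_mul_pow_of_mem_map haI (by simpa using ha) h
  have hy' : a ^ (N + 1) = y := FaithfulSMul.algebraMap_injective A F (by
    simpa [pow_succ'] using hay)
  exact ⟨N, hy' ▸ hy⟩

theorem isIntegrallyClosed_blowupChart [IsDomain A] [IsIntegrallyClosed A] [IsFractionRing A F]
    (haI : a ∈ I) (ha : a ≠ 0) (h : ∀ n, IdealIsIntegrallyClosed (I ^ n)) :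
    IsIntegrallyClosed (blowupChart F I a) := by
  have hinj := IsFractionRing.injective A F
  have : FaithfulSMul A F := (faithfulSMul_iff_algebraMap_injective A F).2 hinj
  have := isFractionRing_subalgebra (blowupChart F I a)
  refine (isIntegrallyClosed_iff F).2 fun {x} hx => ?_
  obtain ⟨n, c, hc0, hcx⟩ := isIntegral_iff_exists_sum_antidiagonal.1 hx
  obtain ⟨N, d, hd0, hd⟩ := exists_mem_pow_mul_pow_of_coe_zero_eq_one haI ha hc0 n
  have hdx : ∑ ij ∈ Finset.HasAntidiagonal.antidiagonal n,
      algebraMap A F (d ij.1) * (x * algebraMap A F a ^ N) ^ ij.2 = 0 := by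
    rw [← zero_mul ((algebraMap A F a ^ N) ^ n), ← hcx, Finset.sum_mul]
    refine Finset.sum_congr rfl fun ij hij => ?_
    rw [(hd _ (Finset.HasAntidiagonal.antidiagonal.fst_le hij)).2,
      ← Finset.HasAntidiagonal.mem_antidiagonal.1 hij, pow_add, mul_pow]
    change _ = (c ij.1 : F) * _ * _
    ring
  obtain ⟨y, hy⟩ := IsIntegrallyClosed.isIntegral_iff.1
    (isIntegral_iff_exists_sum_antidiagonal.2 ⟨n, d, hd0, hdx⟩)
  have hyI : IsIntegralOverIdeal (I ^ N) y := isIntegralOverIdeal_iff_exists_sum_antidiagonal.2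
    ⟨n, d, hd0, fun i hi => (hd i hi).1, hinj (by simpa [hy] using hdx)⟩
  exact ⟨⟨x, (mem_blowupChart_iff haI (by simpa using ha)).2 ⟨N, y, h N _ hyI, hy.symm⟩⟩, rfl⟩

theorem ringKrullDim_blowupChart_le [IsNoetherianRing A] [IsFractionRing A F] :
    ringKrullDim (blowupChart F I a) ≤ ringKrullDim A :=
  ringKrullDim_subalgebra_le blowupChart_fg

instance [IsNoetherianRing A] : IsNoetherianRing (blowupChart F I a) :=
  have : Algebra.FiniteType A (blowupChart F I a) :=
    (Subalgebra.fg_iff_finiteType _).1 blowupChart_fg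
  Algebra.FiniteType.isNoetherianRing A _

end BlowupChart

section GeneralElements

variable {A : Type*} [CommRing A]

/-- The filter of general elements of an ideal `I`: a property holds for general `a ∈ I` if it
holds for all `a ∈ I` outside finitely many ideals, none of which contains `I`. -/
def generalElements (I : Ideal A) : Filter A :=
  generate (insert (I : Set A) ((fun v : Ideal A => (v : Set A)ᶜ) '' {v | ¬ I ≤ v}))

variable {I v : Ideal A}

theorem eventually_generalElements_mem (I : Ideal A) : ∀ᶠ a in generalElements I, a ∈ I :=
  mem_generate_of_mem (Set.mem_insert _ _)

theorem eventually_generalElements_notMem (hv : ¬ I ≤ v) : ∀ᶠ a in generalElements I, a ∉ v :=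
  mem_generate_of_mem (Set.mem_insert_of_mem _ ⟨v, hv, rfl⟩)

theorem eventually_generalElements_ne_zero (hI : I ≠ ⊥) : ∀ᶠ a in generalElements I, a ≠ 0 :=
  eventually_generalElements_notMem (v := ⊥) (by simpa using hI)

theorem eventually_generalElements_mul_algebraMap_ne {B : Type*} [CommRing B] [IsDomain B]
    [Algebra A B] {g : A} (hg : g ∈ I) (hg0 : algebraMap A B g ≠ 0) {s : Set (Ideal B)}
    (hs : s.Finite) (h : ∀ Q ∈ s, Q ≠ ⊤) :
    ∀ᶠ a in generalElements I, ∀ Q ∈ s, ∀ q ∈ Q, q * algebraMap A B g ≠ algebraMap A B a := by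
  refine (eventually_all_finite hs).2 fun Q hQ => ?_
  have hle : ¬ I ≤ (Q * Ideal.span {algebraMap A B g}).comap (algebraMap A B) := fun hle => by
    obtain ⟨q, hq, hqg⟩ := Ideal.mem_mul_span_singleton.1 (hle hg)
    obtain rfl := (mul_eq_right₀ hg0).1 hqg
    exact h Q hQ ((Ideal.eq_top_iff_one Q).2 hq)
  filter_upwards [eventually_generalElements_notMem hle] with a ha q hq h
  exact ha (Ideal.mem_mul_span_singleton.2 ⟨q, hq, h⟩)

section NeBot

variable [IsLocalRing A] [Infinite (ResidueField A)] {M : Type*} [AddCommGroup M] [Module A M]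
  [Module.Finite A M]

theorem infinite_quotient_of_ne_top {N : Submodule A M} (hN : N ≠ ⊤) : Infinite (M ⧸ N) := by
  obtain ⟨N', hN', hle⟩ := (eq_top_or_exists_le_coatom N).resolve_left hN
  obtain ⟨i, hi, ⟨e⟩⟩ := isSimpleModule_iff_quot_maximal.1 (isSimpleModule_iff_isCoatom.2 hN')
  obtain rfl := eq_maximalIdeal hi
  have : Infinite (M ⧸ N') := e.toEquiv.symm.infinite_iff.1 ‹Infinite (ResidueField A)›
  exact Infinite.of_surjective _ (Submodule.factor_surjective hle)

theorem exists_forall_notMem_of_ne_top {s : Set (Submodule A M)} (hs : s.Finite)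
    (h : ∀ N ∈ s, N ≠ ⊤) : ∃ x, ∀ N ∈ s, x ∉ N := by
  by_contra! hcover
  have hcover' : ⋃ N ∈ hs.toFinset, (N : Set M) = Set.univ := by
    simpa [Set.eq_univ_iff_forall] using hcover
  obtain ⟨N, hN, hfin⟩ := Submodule.exists_finiteIndex_of_cover hcover'
  have := infinite_quotient_of_ne_top (h N (hs.mem_toFinset.1 hN))
  have : Finite (M ⧸ N) := AddSubgroup.finite_quotient_of_finiteIndex
  exact not_finite (M ⧸ N)

instance [IsNoetherianRing A] : (generalElements I).NeBot := by
  refine generate_neBot_iff.2 fun t ht htfin => ?_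
  let V : Set (Ideal A) := {v | ¬ I ≤ v ∧ (v : Set A)ᶜ ∈ t}
  have hV : V.Finite := Set.Finite.of_finite_image
    (htfin.subset (Set.image_subset_iff.2 fun _ hv => hv.2))
    fun v _ w _ h => SetLike.coe_injective (compl_injective h)
  obtain ⟨x, hx⟩ := exists_forall_notMem_of_ne_top (hV.image (Submodule.comap I.subtype)) <| by
    rintro _ ⟨v, hv, rfl⟩ h
    exact hv.1 (Submodule.comap_subtype_eq_top.1 h)
  refine ⟨x, fun s hs => ?_⟩
  rcases ht hs with rfl | ⟨v, hv, rfl⟩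
  · exact x.2
  · exact hx _ ⟨v, ⟨hv, hs⟩, rfl⟩

end NeBot

end GeneralElements

section JointReduction

variable {A : Type*} [CommRing A]

section PowLe

variable {E E' K L : Ideal A} {n n' : ℕ}

theorem sup_pow_le_mul_pow (hE : E ≤ K) (hE' : E' ≤ K) (h : E ^ (n + 1) ≤ L * K ^ n)
    (h' : E' ^ (n' + 1) ≤ L * K ^ n') : (E ⊔ E') ^ (n + n' + 1) ≤ L * K ^ (n + n') := by
  have mul_le {i j k : ℕ} {E₁ E₂ : Ideal A} (h₁ : E₁ ^ (k + 1) ≤ L * K ^ k) (hE₁ : E₁ ≤ K)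
      (hE₂ : E₂ ≤ K) (hk : k + 1 ≤ i) (hij : i + j = n + n' + 1) :
      E₁ ^ i * E₂ ^ j ≤ L * K ^ (n + n') := by
    obtain ⟨l, rfl⟩ := Nat.exists_eq_add_of_le hk
    calc E₁ ^ (k + 1 + l) * E₂ ^ j = E₁ ^ (k + 1) * (E₁ ^ l * E₂ ^ j) := by ring
      _ ≤ L * K ^ k * (K ^ l * K ^ j) := by gcongr
      _ = L * K ^ (n + n') := by
        rw [mul_assoc, ← pow_add, ← pow_add]
        congr 2
        lia
  rw [← Ideal.add_eq_sup, add_pow, Ideal.sum_eq_sup]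
  refine Finset.sup_le fun i hi => Ideal.mul_le_left.trans ?_
  have hi' := Finset.mem_range_succ_iff.1 hi
  rcases Nat.lt_or_ge n i with hni | hni
  · exact mul_le h hE hE' hni (Nat.add_sub_cancel' hi')
  · rw [mul_comm (E ^ i)]
    exact mul_le h' hE' hE (by lia) (Nat.sub_add_cancel hi')

theorem exists_span_pow_le_mul_pow {s : Set A} (hs : s.Finite) (hsK : s ⊆ K)
    (h : ∀ e ∈ s, ∃ n, e ^ (n + 1) ∈ L * K ^ n) : ∃ n, Ideal.span s ^ (n + 1) ≤ L * K ^ n := by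
  induction s, hs using Set.Finite.induction_on with
  | empty => exact ⟨0, by simp⟩
  | @insert e s _ _ ih =>
    rw [Set.insert_subset_iff] at hsK
    obtain ⟨n, hn⟩ := h e (Set.mem_insert e s)
    obtain ⟨n', hn'⟩ := ih hsK.2 fun e he => h e (Set.mem_insert_of_mem _ he)
    refine ⟨n + n', ?_⟩
    rw [Ideal.span_insert]
    refine sup_pow_le_mul_pow ((Ideal.span_singleton_le_iff_mem _).2 hsK.1) (Ideal.span_le.2 hsK.2)
      ?_ hn'
    rwa [Ideal.span_singleton_pow, Ideal.span_singleton_le_iff_mem]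

end PowLe

/-- The pair `a ∈ I`, `b ∈ J` is a joint reduction of `(I, J)` if `aJ + bI` is a reduction of
`IJ`. -/
def IsJointReduction (I J : Ideal A) (a b : A) : Prop :=
  ∃ n, (I * J) ^ (n + 1) ≤ (Ideal.span {a} * J ⊔ Ideal.span {b} * I) * (I * J) ^ n

variable {I J : Ideal A} {a b : A}

theorem IsJointReduction.symm (h : IsJointReduction I J a b) : IsJointReduction J I b a := by
  rwa [IsJointReduction, sup_comm, mul_comm J I]

section General

variable [IsDomain A] [IsNoetherianRing A] {x g h : A}

theorem eventually_exists_pow_mem_mul_pow (hdim : ringKrullDim A ≤ 2) (hx : x ≠ 0) (hg : g ∈ I)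
    (hg0 : g ≠ 0) (hh : h ∈ J) (hh0 : h ≠ 0) :
    ∀ᶠ a in generalElements I, ∀ᶠ b in generalElements J, ∃ n, (g * h) ^ (n + 1) ∈
      (Ideal.span {x} * (I * J) ⊔ (Ideal.span {a} * J ⊔ Ideal.span {b} * I)) * (I * J) ^ n := by
  let F := FractionRing A
  let B := blowupChart F (I * J) (g * h)
  let φ := algebraMap A B
  have hne {r : A} (hr : r ≠ 0) : φ r ≠ 0 :=
    (map_ne_zero_iff φ (FaithfulSMul.algebraMap_injective A B)).2 hr
  have hgh : algebraMap A F (g * h) ≠ 0 := by simpa using ⟨hg0, hh0⟩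
  have hfin (i : Ideal B) := Ideal.finite_minimalPrimes_of_isNoetherianRing B i
  have hneTop (i : Ideal B) : ∀ Q ∈ i.minimalPrimes, Q ≠ ⊤ := fun Q hQ => hQ.1.1.ne_top
  filter_upwards [eventually_generalElements_mem I, eventually_generalElements_mul_algebraMap_ne
    hg (hne hg0) (hfin (Ideal.span {φ x})) (hneTop _)] with a ha haQ
  obtain ⟨p, hp⟩ := exists_mul_algebraMap_blowupChart_eq hgh (Ideal.mul_mem_mul ha hh)
  filter_upwards [eventually_generalElements_mem J, eventually_generalElements_mul_algebraMap_ne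
    hh (hne hh0) (hfin (Ideal.span {φ x, p})) (hneTop _)] with b hb hbQ
  obtain ⟨q, hq⟩ := exists_mul_algebraMap_blowupChart_eq hgh (Ideal.mul_mem_mul hg hb)
  have hpa : p * φ g = φ a := mul_right_cancel₀ (hne hh0) (by simpa [φ, mul_assoc] using hp)
  have hqb : q * φ h = φ b := mul_right_cancel₀ (hne hg0) (by
    simpa [φ, mul_assoc, mul_comm, mul_left_comm] using hq)
  have htop := span_pair_sup_span_singleton_eq_top (ringKrullDim_blowupChart_le.trans hdim)
    (hne hx) (fun Q hQ hpQ => haQ Q hQ p hpQ hpa) (fun Q hQ hqQ => hbQ Q hQ q hqQ hqb)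
  obtain ⟨c, d, e, hcde⟩ : ∃ c d e, c * φ x + d * p + e * q = 1 := by
    obtain ⟨y, hy, z, hz, hyz⟩ := Submodule.mem_sup.1 (htop ▸ Submodule.mem_top (x := (1 : B)))
    obtain ⟨c, d, rfl⟩ := Ideal.mem_span_pair.1 hy
    obtain ⟨e, rfl⟩ := Ideal.mem_span_singleton'.1 hz
    exact ⟨c, d, e, hyz⟩
  refine exists_pow_mem_mul_pow_of_mem_map (F := F) (Ideal.mul_mem_mul hg hh)
    (mul_ne_zero hg0 hh0) ?_
  have hsum : φ (g * h) = c * φ (x * (g * h)) + (d * φ (a * h) + e * φ (b * g)) := by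
    simp only [map_mul, ← hpa, ← hqb]
    linear_combination (-(φ g * φ h)) * hcde
  rw [hsum]
  refine add_mem (Ideal.mul_mem_left _ c (Ideal.mem_map_of_mem φ (Ideal.mem_sup_left
    (Ideal.mul_mem_mul (Ideal.mem_span_singleton_self x) (Ideal.mul_mem_mul hg hh)))))
    (add_mem (Ideal.mul_mem_left _ d (Ideal.mem_map_of_mem φ (Ideal.mem_sup_right ?_)))
      (Ideal.mul_mem_left _ e (Ideal.mem_map_of_mem φ (Ideal.mem_sup_right ?_))))
  · exact Ideal.mem_sup_left (Ideal.mul_mem_mul (Ideal.mem_span_singleton_self a) hh)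
  · exact Ideal.mem_sup_right (Ideal.mul_mem_mul (Ideal.mem_span_singleton_self b) hg)

open scoped Pointwise in
theorem eventually_isJointReduction [IsLocalRing A] (hdim : ringKrullDim A ≤ 2)
    (hm : maximalIdeal A ≠ ⊥) (I J : Ideal A) :
    ∀ᶠ a in generalElements I, ∀ᶠ b in generalElements J, IsJointReduction I J a b := by
  obtain ⟨x, hxm, hx⟩ := Submodule.exists_mem_ne_zero_of_ne_bot hm
  obtain ⟨s, hs, hsI : Ideal.span s = I⟩ := Submodule.fg_def.1 (IsNoetherian.noetherian I)
  obtain ⟨t, ht, htJ : Ideal.span t = J⟩ := Submodule.fg_def.1 (IsNoetherian.noetherian J)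
  subst hsI htJ
  have hst : Ideal.span s * Ideal.span t = Ideal.span (s * t) := Ideal.span_mul_span' s t
  have hpow : ∀ᶠ a in generalElements (Ideal.span s), ∀ e ∈ s * t,
      ∀ᶠ b in generalElements (Ideal.span t), ∃ n, e ^ (n + 1) ∈
        (Ideal.span {x} * (Ideal.span s * Ideal.span t) ⊔
          (Ideal.span {a} * Ideal.span t ⊔ Ideal.span {b} * Ideal.span s)) *
            (Ideal.span s * Ideal.span t) ^ n := by
    refine (eventually_all_finite (hs.mul ht)).2 fun e he => ?_
    obtain ⟨g, hg, h, hh, rfl⟩ := he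
    rcases eq_or_ne g 0 with rfl | hg0
    · exact .of_forall fun _ => .of_forall fun _ => ⟨0, by simp⟩
    rcases eq_or_ne h 0 with rfl | hh0
    · exact .of_forall fun _ => .of_forall fun _ => ⟨0, by simp⟩
    exact eventually_exists_pow_mem_mul_pow hdim hx (Ideal.subset_span hg) hg0
      (Ideal.subset_span hh) hh0
  filter_upwards [hpow] with a ha
  filter_upwards [(eventually_all_finite (hs.mul ht)).2 ha] with b hb
  obtain ⟨n, hn⟩ := exists_span_pow_le_mul_pow (hs.mul ht) (hst ▸ Ideal.subset_span) hb
  refine ⟨n, Submodule.le_of_le_smul_of_le_jacobson_bot (I := maximalIdeal A)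
    (IsNoetherian.noetherian _) (maximalIdeal_le_jacobson _) ?_⟩
  rw [← hst, Ideal.sup_mul, mul_assoc, ← pow_succ', sup_comm] at hn
  refine hn.trans (sup_le_sup_left ?_ _)
  exact Ideal.mul_mono_left ((Ideal.span_singleton_le_iff_mem _).2 hxm)

end General

end JointReduction

section ReesElements

variable {A : Type*} [CommRing A] {K : Ideal A}

theorem coeff_reesMonomial_mul {x : A} (hx : x ∈ K ^ 1) (s : reesAlgebra K) (n : ℕ) :
    ((reesMonomial hx * s : reesAlgebra K) : A[X]).coeff (n + 1) = x * (s : A[X]).coeff n := by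
  rw [MulMemClass.coe_mul, coe_reesMonomial, coeff_monomial_mul]

theorem coeff_algebraMap_mul (x : A) (s : reesAlgebra K) (n : ℕ) :
    ((algebraMap A (reesAlgebra K) x * s : reesAlgebra K) : A[X]).coeff n =
      x * (s : A[X]).coeff n :=
  coeff_C_mul _

theorem algebraMap_mul_reesMonomial {n : ℕ} {x y : A} (hx : x ∈ K ^ n) :
    algebraMap A (reesAlgebra K) y * reesMonomial hx = reesMonomial (Ideal.mul_mem_left _ y hx) :=
  Subtype.ext (C_mul_monomial ..)

theorem reesMonomial_mul_reesMonomial {m n : ℕ} {x y : A} (hx : x ∈ K ^ m) (hy : y ∈ K ^ n) :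
    reesMonomial hx * reesMonomial hy =
      reesMonomial (pow_add K m n ▸ Ideal.mul_mem_mul hx hy) :=
  Subtype.ext (monomial_mul_monomial ..)

theorem mem_of_forall_reesMonomial_mem {P : Ideal (reesAlgebra K)} {s : reesAlgebra K}
    (h : ∀ n, reesMonomial (coeff_mem_of_mem_reesAlgebra s n) ∈ P) : s ∈ P := by
  have hs : s = ∑ n ∈ (s : A[X]).support, reesMonomial (coeff_mem_of_mem_reesAlgebra s n) := by
    refine Subtype.ext ?_
    rw [AddSubmonoidClass.coe_finsetSum]
    exact (s : A[X]).as_sum_support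
  rw [hs]
  exact Ideal.sum_mem _ fun n _ => h n

variable (K) in
/-- The projection `A[Kt] → A` of the Rees algebra onto its degree-zero part. -/
noncomputable def reesConstantCoeff : reesAlgebra K →+* A :=
  (constantCoeff (R := A)).comp (algebraMap (reesAlgebra K) A[X])

@[simp]
theorem reesConstantCoeff_algebraMap (x : A) :
    reesConstantCoeff K (algebraMap A (reesAlgebra K) x) = x :=
  coeff_C_zero

@[simp]
theorem reesConstantCoeff_reesMonomial {n : ℕ} {x : A} (hx : x ∈ K ^ (n + 1)) :
    reesConstantCoeff K (reesMonomial hx) = 0 :=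
  coeff_monomial_of_ne _ n.succ_ne_zero.symm

/-- The ideal of the `x ∈ Kⁿ` with `x tⁿ ∈ P`, for an ideal `P` of the Rees algebra `A[Kt]`. -/
noncomputable def reesDegreePart (P : Ideal (reesAlgebra K)) (n : ℕ) : Ideal A :=
  ((P.restrictScalars A).map (reesAlgebra K).val.toLinearMap).comap (monomial n)

variable {P : Ideal (reesAlgebra K)}

theorem mem_reesDegreePart_iff {n : ℕ} {x : A} :
    x ∈ reesDegreePart P n ↔ ∃ hx : x ∈ K ^ n, reesMonomial hx ∈ P := by
  constructor
  · rintro ⟨s, hs, hsx⟩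
    have hx : x ∈ K ^ n := reesAlgebra.monomial_mem.1 (hsx ▸ s.2)
    obtain rfl : s = reesMonomial hx := Subtype.ext hsx
    exact ⟨hx, hs⟩
  · rintro ⟨hx, hP⟩
    exact ⟨reesMonomial hx, hP, rfl⟩

theorem mul_pow_le_reesDegreePart {L : Ideal A} (h : L ≤ reesDegreePart P 1) (n : ℕ) :
    L * K ^ n ≤ reesDegreePart P (n + 1) := by
  refine Ideal.mul_le.2 fun d hd x hx => ?_
  obtain ⟨hd1, hdP⟩ := mem_reesDegreePart_iff.1 (h hd)
  have hmul := P.mul_mem_right (reesMonomial hx) hdP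
  rw [reesMonomial_mul_reesMonomial] at hmul
  exact add_comm 1 n ▸ mem_reesDegreePart_iff.2 ⟨_, hmul⟩

theorem le_reesDegreePart_one_of_pow_le [P.IsPrime] {n : ℕ}
    (h : K ^ (n + 1) ≤ reesDegreePart P (n + 1)) : K ≤ reesDegreePart P 1 := by
  intro d hd
  have hd1 : d ∈ K ^ 1 := by rwa [pow_one]
  obtain ⟨hdn, hdP⟩ := mem_reesDegreePart_iff.1 (h (Ideal.pow_mem_pow hd (n + 1)))
  refine mem_reesDegreePart_iff.2 ⟨hd1, Ideal.IsPrime.mem_of_pow_mem ‹_› (n + 1) ?_⟩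
  convert hdP
  exact Subtype.ext (by simp [monomial_pow])

theorem comap_reesConstantCoeff_le {Q : Ideal A} (h0 : Q ≤ P.comap (algebraMap A (reesAlgebra K)))
    (h1 : K ≤ reesDegreePart P 1) : Q.comap (reesConstantCoeff K) ≤ P := by
  refine fun s hs => mem_of_forall_reesMonomial_mem fun n => ?_
  cases n with
  | zero => exact h0 hs
  | succ n =>
    have hcoeff := coeff_mem_of_mem_reesAlgebra s (n + 1)
    have hle : K ^ (n + 1) ≤ reesDegreePart P (n + 1) := by
      rw [pow_succ']
      exact mul_pow_le_reesDegreePart h1 n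
    exact (mem_reesDegreePart_iff.1 (hle hcoeff)).2

theorem comap_reesConstantCoeff_bot_ne_bot (hK : K ≠ ⊥) :
    (⊥ : Ideal A).comap (reesConstantCoeff K) ≠ ⊥ := by
  obtain ⟨x, hx, hx0⟩ := Submodule.exists_mem_ne_zero_of_ne_bot hK
  have hx1 : x ∈ K ^ 1 := by rwa [pow_one]
  refine ne_of_mem_of_not_mem' (a := reesMonomial hx1) (by simp) fun h => hx0 ?_
  simpa using congrArg (Subtype.val : reesAlgebra K → A[X]) h

theorem height_add_one_le_height_comap_reesConstantCoeff [IsDomain A] [IsNoetherianRing A]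
    (hK : K ≠ ⊥) (Q : Ideal A) [Q.IsPrime] :
    Q.height + 1 ≤ (Q.comap (reesConstantCoeff K)).height := by
  have hsurj : Function.Surjective (reesConstantCoeff K) :=
    fun x => ⟨_, reesConstantCoeff_algebraMap x⟩
  obtain ⟨l, hlast, hlen⟩ := Q.exists_ltSeries_length_eq_height
  let l' := l.map _ (RingHom.strictMono_comap_of_surjective hsurj)
  have hbot : ⊥ < l'.head := by
    refine bot_lt_iff_ne_bot.2 fun h => comap_reesConstantCoeff_bot_ne_bot hK (le_bot_iff.1 ?_)
    exact (Ideal.comap_mono (bot_le (a := l.head.asIdeal))).trans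
      (congrArg PrimeSpectrum.asIdeal h).le
  have hle := Order.length_le_height_last (p := l'.cons ⊥ hbot)
  rw [RelSeries.last_cons, LTSeries.last_map, hlast, ← PrimeSpectrum.height_eq_orderHeight] at hle
  simpa [l', hlen] using hle

end ReesElements

section Superficial

variable {A : Type*} [CommRing A] {I J : Ideal A} {a b : A}

/-- `d` is a superficial element of `I` if `Iⁿ⁺¹ : d` is contained in `Iⁿ` for all `n`; for
`d ∈ I` this says that the initial form of `d` is regular on the associated graded ring of `I`. -/
def IsSuperficial (I : Ideal A) (d : A) : Prop :=
  ∀ n w, d * w ∈ I ^ (n + 1) → w ∈ I ^ n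

section General

variable [IsDomain A]

theorem exists_eq_mul_of_mul_eq_mul (ha : a ≠ 0)
    (hab : IsSMulRegular (A ⧸ Ideal.span {a}) b) {x y : A} (h : a * x = b * y) :
    ∃ v, y = a * v ∧ x = b * v := by
  obtain ⟨v, rfl⟩ := Ideal.mem_span_singleton.1
    (isSMulRegular_quotient_iff.1 hab y (Ideal.mem_span_singleton.2 ⟨x, h.symm⟩))
  exact ⟨v, rfl, mul_left_cancel₀ ha (by rw [h, mul_left_comm])⟩

theorem reesMonomial_notMem_span_singleton {x w : A} (hx : x ≠ 0) {n : ℕ} (hw : w ∉ I ^ n)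
    (hxw : x ^ n * w ∈ I ^ n) :
    reesMonomial hxw ∉ Ideal.span {algebraMap A (reesAlgebra I) x ^ n} := fun h => by
  obtain ⟨r, hr⟩ := Ideal.mem_span_singleton'.1 h
  have hcoeff := congrArg (fun s : reesAlgebra I => (s : A[X]).coeff n) hr
  simp only [mul_comm r, ← map_pow, coeff_algebraMap_mul, coe_reesMonomial,
    coeff_monomial_same] at hcoeff
  exact hw (mul_left_cancel₀ (pow_ne_zero n hx) hcoeff ▸ coeff_mem_of_mem_reesAlgebra r n)

theorem eventually_isSuperficial [IsNoetherianRing A] [IsIntegrallyClosed (reesAlgebra I)]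
    (hI : I ≠ ⊥) : ∀ᶠ d in generalElements I, IsSuperficial I d := by
  obtain ⟨x, hxI, hx⟩ := Submodule.exists_mem_ne_zero_of_ne_bot hI
  have hX : algebraMap A (reesAlgebra I) x ≠ 0 := algebraMap_reesAlgebra_ne_zero hx
  have hfin := Ideal.finite_minimalPrimes_of_isNoetherianRing (reesAlgebra I)
    (Ideal.span {algebraMap A (reesAlgebra I) x})
  have hgen : ∀ᶠ d in generalElements I,
      ∀ P ∈ (Ideal.span {algebraMap A (reesAlgebra I) x}).minimalPrimes,
        ¬ I ≤ reesDegreePart P 1 → d ∉ reesDegreePart P 1 :=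
    (eventually_all_finite hfin).2 fun P _ =>
      eventually_imp_distrib_left.2 fun h => eventually_generalElements_notMem h
  filter_upwards [eventually_generalElements_mem I, hgen] with d hd hdP n w hdw
  by_contra hw
  have hxw : x ^ n * w ∈ I ^ n := Ideal.mul_mem_right _ _ (Ideal.pow_mem_pow hxI n)
  obtain ⟨P, hP, hPe⟩ := exists_associatedPrime_colon_le
    (reesMonomial_notMem_span_singleton hx hw hxw)
  have hprime := hP.isPrime
  have hXP : algebraMap A (reesAlgebra I) x ∈ P := hprime.mem_of_pow_mem n
    (le_of_mem_associatedPrimes_quotient hP (Ideal.mem_span_singleton_self _))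
  have hmin : P ∈ (Ideal.span {algebraMap A (reesAlgebra I) x}).minimalPrimes :=
    ⟨⟨hprime, (Ideal.span_singleton_le_iff_mem _).2 hXP⟩, fun Q hQ hQP =>
      (eq_of_le_of_mem_associatedPrimes (pow_ne_zero n hX) hP hQ.1 hQP
        (ne_bot_of_le_ne_bot (by simpa using hX) hQ.2)).ge⟩
  have hd1 : d ∈ I ^ 1 := by rwa [pow_one]
  have hdP' : d ∈ reesDegreePart P 1 := by
    refine mem_reesDegreePart_iff.2 ⟨hd1, hPe (Submodule.mem_colon_singleton.2 ?_)⟩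
    refine Ideal.mem_span_singleton'.2 ⟨reesMonomial hdw, ?_⟩
    rw [smul_eq_mul, mul_comm, ← map_pow, algebraMap_mul_reesMonomial,
      reesMonomial_mul_reesMonomial]
    exact Subtype.ext (by simp [add_comm 1 n, mul_left_comm])
  have hIP : I ≤ reesDegreePart P 1 := not_not.1 fun h => hdP P hmin h hdP'
  have heq : (⊥ : Ideal A).comap (reesConstantCoeff I) = P :=
    eq_of_le_of_mem_associatedPrimes (pow_ne_zero n hX) hP (Ideal.IsPrime.comap _)
      (comap_reesConstantCoeff_le bot_le hIP) (comap_reesConstantCoeff_bot_ne_bot hI)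
  rw [← heq] at hXP
  exact hx (by simpa using hXP)

end General

section DimensionTwo

variable [IsLocalRing A]

theorem maximalIdeal_le_radical_mul (hI : maximalIdeal A ≤ I.radical)
    (hJ : maximalIdeal A ≤ J.radical) : maximalIdeal A ≤ (I * J).radical :=
  (Ideal.radical_mul I J).symm ▸ le_inf hI hJ

theorem IsJointReduction.maximalIdeal_le_radical_span (h : IsJointReduction I J a b)
    (hI : maximalIdeal A ≤ I.radical) (hJ : maximalIdeal A ≤ J.radical) :
    maximalIdeal A ≤ (Ideal.span {a, b}).radical := by
  obtain ⟨n, hn⟩ := h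
  refine (maximalIdeal_le_radical_mul hI hJ).trans ?_
  rw [← Ideal.radical_pow (I * J) n.succ_ne_zero, Ideal.span_insert]
  exact Ideal.radical_mono (hn.trans (Ideal.mul_le_left.trans
    (sup_le_sup Ideal.mul_le_left Ideal.mul_le_left)))

variable [IsDomain A] [IsNoetherianRing A] [IsIntegrallyClosed A]

theorem isSMulRegular_quotient_span (hdim : 2 ≤ (maximalIdeal A).height) (ha : a ≠ 0)
    (hab : maximalIdeal A ≤ (Ideal.span {a, b}).radical) :
    IsSMulRegular (A ⧸ Ideal.span {a}) b := by
  refine isSMulRegular_iff_forall_notMem.2 fun P hP hbP => ?_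
  have haP : a ∈ P := le_of_mem_associatedPrimes_quotient hP (Ideal.mem_span_singleton_self _)
  have hle : maximalIdeal A ≤ P := hab.trans (hP.isPrime.radical_le_iff.2 (Ideal.span_le.2
    (Set.insert_subset haP (Set.singleton_subset_iff.2 hbP))))
  have hheight : (2 : ℕ∞) ≤ 1 := hdim.trans ((Ideal.height_mono hle).trans
    (height_le_one_of_mem_associatedPrimes ha hP))
  exact absurd hheight (by decide)

theorem isSMulRegular_quotient_span_pow (hdim : 2 ≤ (maximalIdeal A).height) (ha : a ≠ 0)
    (hab : maximalIdeal A ≤ (Ideal.span {a, b}).radical) (m n : ℕ) :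
    IsSMulRegular (A ⧸ Ideal.span {a ^ m}) (b ^ n) := by
  refine isSMulRegular_quotient_span hdim (pow_ne_zero m ha) (hab.trans ?_)
  refine Ideal.radical_le_radical_iff.2 (Ideal.span_le.2 (Set.insert_subset ?_ ?_))
  · exact ⟨m, Ideal.subset_span (Set.mem_insert _ _)⟩
  · exact Set.singleton_subset_iff.2 ⟨n, Ideal.subset_span (Set.mem_insert_of_mem _ rfl)⟩

end DimensionTwo

end Superficial

section ReesCohenMacaulay

variable {A : Type*} [CommRing A] {I : Ideal A} {a b : A}

theorem isSMulRegular_quotient_reesMonomial [IsDomain A] (ha : a ≠ 0)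
    (hab : IsSMulRegular (A ⧸ Ideal.span {a}) b) (hb : IsSuperficial I b) (hb1 : b ∈ I ^ 1) :
    IsSMulRegular (reesAlgebra I ⧸ Ideal.span {algebraMap A (reesAlgebra I) a})
      (reesMonomial hb1) := by
  refine isSMulRegular_quotient_iff.2 fun r hr => mem_of_forall_reesMonomial_mem fun n => ?_
  obtain ⟨s, hs⟩ := Ideal.mem_span_singleton'.1 hr
  have hcoeff := congrArg (fun z : reesAlgebra I => (z : A[X]).coeff (n + 1)) hs
  simp only [mul_comm s, coeff_reesMonomial_mul, coeff_algebraMap_mul] at hcoeff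
  obtain ⟨w, hw, hbw⟩ := exists_eq_mul_of_mul_eq_mul ha hab hcoeff
  have hwn : w ∈ I ^ n := hb n w (hbw ▸ coeff_mem_of_mem_reesAlgebra s (n + 1))
  refine Ideal.mem_span_singleton.2 ⟨reesMonomial hwn, ?_⟩
  rw [algebraMap_mul_reesMonomial]
  exact Subtype.ext (by simp [hw])

theorem IsJointReduction.exists_pow_le (h : IsJointReduction I I a b) :
    ∃ n, I ^ (n + 1) ≤ Ideal.span {a, b} * I ^ n := by
  obtain ⟨n, hn⟩ := h
  refine ⟨2 * n + 1, ?_⟩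
  calc I ^ (2 * n + 1 + 1) = (I * I) ^ (n + 1) := by ring
    _ ≤ (Ideal.span {a} * I ⊔ Ideal.span {b} * I) * (I * I) ^ n := hn
    _ = Ideal.span {a, b} * I ^ (2 * n + 1) := by
      rw [Ideal.span_insert, ← Ideal.sup_mul]
      ring

theorem IsJointReduction.le_reesDegreePart (h : IsJointReduction I I a b)
    {P : Ideal (reesAlgebra I)} [P.IsPrime] (ha : a ∈ reesDegreePart P 1)
    (hb : b ∈ reesDegreePart P 1) : I ≤ reesDegreePart P 1 := by
  obtain ⟨n, hn⟩ := h.exists_pow_le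
  have hab : Ideal.span {a, b} ≤ reesDegreePart P 1 :=
    Ideal.span_le.2 (Set.insert_subset ha (Set.singleton_subset_iff.2 hb))
  exact le_reesDegreePart_one_of_pow_le (hn.trans (mul_pow_le_reesDegreePart hab n))

theorem mem_sup_of_reesMonomial_mem_span_pair {z : A} {hb : b ∈ I ^ 1} {hz : z ∈ I ^ 1}
    (h : reesMonomial hz ∈ Ideal.span {algebraMap A (reesAlgebra I) a, reesMonomial hb}) :
    z ∈ Ideal.span {a} * I ⊔ Ideal.span {b} := by
  obtain ⟨p, q, hpq⟩ := Ideal.mem_span_pair.1 h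
  have hcoeff := congrArg (fun s : reesAlgebra I => (s : A[X]).coeff (0 + 1)) hpq
  simp only [mul_comm p, mul_comm q, AddMemClass.coe_add, coeff_add, coeff_algebraMap_mul,
    coeff_reesMonomial_mul, coe_reesMonomial, zero_add, coeff_monomial_same] at hcoeff
  rw [← hcoeff]
  have hp : (p : A[X]).coeff 1 ∈ I := by simpa using coeff_mem_of_mem_reesAlgebra p 1
  exact Submodule.add_mem_sup (Ideal.mul_mem_mul (Ideal.mem_span_singleton_self a) hp)
    (Ideal.mul_mem_right _ _ (Ideal.mem_span_singleton_self b))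

variable [IsLocalRing A]

theorem IsJointReduction.comap_maximalIdeal_le (h : IsJointReduction I I a b)
    (hI : maximalIdeal A ≤ I.radical) {P : Ideal (reesAlgebra I)} [P.IsPrime]
    (ha : a ∈ reesDegreePart P 1) (hb : b ∈ reesDegreePart P 1)
    (ha0 : algebraMap A (reesAlgebra I) a ∈ P) (hb0 : algebraMap A (reesAlgebra I) b ∈ P) :
    (maximalIdeal A).comap (reesConstantCoeff I) ≤ P := by
  refine comap_reesConstantCoeff_le ?_ (h.le_reesDegreePart ha hb)
  refine (h.maximalIdeal_le_radical_span hI hI).trans ?_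
  exact (Ideal.IsPrime.comap _).radical_le_iff.2
    (Ideal.span_le.2 (Set.insert_subset ha0 (Set.singleton_subset_iff.2 hb0)))

instance : ((maximalIdeal A).comap (reesConstantCoeff I)).IsMaximal :=
  Ideal.comap_isMaximal_of_surjective _ fun x => ⟨_, reesConstantCoeff_algebraMap x⟩

variable [IsDomain A] [IsNoetherianRing A]

theorem comap_maximalIdeal_notMem_associatedPrimes (hCM : IsCohenMacaulayRing (reesAlgebra I))
    (hdim : 2 ≤ (maximalIdeal A).height) (hI : I ≠ ⊥) (ha : a ∈ maximalIdeal A) (ha0 : a ≠ 0)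
    (hab : IsSMulRegular (A ⧸ Ideal.span {a}) b) (hb : IsSuperficial I b) (hb1 : b ∈ I ^ 1) :
    (maximalIdeal A).comap (reesConstantCoeff I) ∉ associatedPrimes (reesAlgebra I)
      (reesAlgebra I ⧸ Ideal.span {algebraMap A (reesAlgebra I) a, reesMonomial hb1}) := by
  rw [Ideal.span_insert, ← Ideal.ofList_singleton (reesMonomial hb1), ← Ideal.ofList_cons]
  have hlen : (2 : ℕ∞) < ((maximalIdeal A).comap (reesConstantCoeff I)).height :=
    ((ENat.lt_add_one_iff Ideal.height_ne_top_of_isPrime).2 hdim).trans_le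
      (height_add_one_le_height_comap_reesConstantCoeff hI _)
  have hloc := hCM.2 ((maximalIdeal A).comap (reesConstantCoeff I)) inferInstance
  have hmem : ∀ r ∈ [algebraMap A (reesAlgebra I) a, reesMonomial hb1],
      r ∈ (maximalIdeal A).comap (reesConstantCoeff I) := by
    simpa using ha
  have hreg := isWeaklyRegular_pair (algebraMap_reesAlgebra_ne_zero ha0)
    (isSMulRegular_quotient_reesMonomial ha0 hab hb hb1)
  exact notMem_associatedPrimes_of_isCohenMacaulayLocalRing hloc hmem hreg (by simpa using hlen)

variable [IsIntegrallyClosed A]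

theorem pow_two_le_of_isCohenMacaulayRing_reesAlgebra (hCM : IsCohenMacaulayRing (reesAlgebra I))
    (hdim : 2 ≤ (maximalIdeal A).height) (hI : maximalIdeal A ≤ I.radical)
    (hIm : I ≤ maximalIdeal A) (ha : a ∈ I) (hb : b ∈ I) (ha0 : a ≠ 0)
    (hab : IsJointReduction I I a b) (hbs : IsSuperficial I b) :
    I ^ 2 ≤ Ideal.span {a} * I ⊔ Ideal.span {b} := by
  intro z hz
  have ha1 : a ∈ I ^ 1 := by rwa [pow_one]
  have hb1 : b ∈ I ^ 1 := by rwa [pow_one]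
  have hz1 : z ∈ I ^ 1 := Ideal.pow_le_pow_right one_le_two hz
  refine mem_sup_of_reesMonomial_mem_span_pair (hb := hb1) (hz := hz1) ?_
  by_contra hcon
  obtain ⟨P, hP, hPe⟩ := exists_associatedPrime_colon_le hcon
  have hprime := hP.isPrime
  have hspan := Ideal.span_le.1 (le_of_mem_associatedPrimes_quotient hP)
  have haP : a ∈ reesDegreePart P 1 := by
    refine mem_reesDegreePart_iff.2 ⟨ha1, hPe (Submodule.mem_colon_singleton.2 ?_)⟩
    refine Ideal.mem_of_dvd _ ⟨reesMonomial hz, ?_⟩ (Ideal.subset_span (Set.mem_insert _ _))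
    rw [smul_eq_mul, reesMonomial_mul_reesMonomial]
    exact Subtype.ext (by simp [← monomial_zero_left, monomial_mul_monomial, mul_comm])
  have hbP : algebraMap A _ b ∈ P := by
    refine hPe (Submodule.mem_colon_singleton.2 ?_)
    refine Ideal.mem_of_dvd _ ⟨algebraMap A _ z, ?_⟩
      (Ideal.subset_span (Set.mem_insert_of_mem _ (Set.mem_singleton _)))
    rw [smul_eq_mul, mul_comm (reesMonomial hb1), algebraMap_mul_reesMonomial,
      algebraMap_mul_reesMonomial]
    exact Subtype.ext (by simp [mul_comm])
  obtain rfl : (maximalIdeal A).comap (reesConstantCoeff I) = P :=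
    (inferInstance : Ideal.IsMaximal _).eq_of_le hprime.ne_top (hab.comap_maximalIdeal_le hI haP
      (mem_reesDegreePart_iff.2 ⟨hb1, hspan (Set.mem_insert_of_mem _ (Set.mem_singleton _))⟩)
      (hspan (Set.mem_insert _ _)) hbP)
  have hreg := isSMulRegular_quotient_span hdim ha0 (hab.maximalIdeal_le_radical_span hI hI)
  exact comap_maximalIdeal_notMem_associatedPrimes hCM hdim
    (ne_of_mem_of_not_mem' ha (by simpa using ha0)) (hIm ha) ha0 hreg hbs hb1 hP

theorem pow_two_le_span_pair_mul (hCM : IsCohenMacaulayRing (reesAlgebra I))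
    (hdim : 2 ≤ (maximalIdeal A).height) (hI : maximalIdeal A ≤ I.radical)
    (hIm : I ≤ maximalIdeal A) (ha : a ∈ I) (hb : b ∈ I) (ha0 : a ≠ 0) (hb0 : b ≠ 0)
    (hab : IsJointReduction I I a b) (has : IsSuperficial I a) (hbs : IsSuperficial I b) :
    I ^ 2 ≤ Ideal.span {a, b} * I := by
  intro z hz
  have hreg := isSMulRegular_quotient_span hdim ha0 (hab.maximalIdeal_le_radical_span hI hI)
  obtain ⟨_, hy, _, hw, h₁⟩ := Submodule.mem_sup.1
    (pow_two_le_of_isCohenMacaulayRing_reesAlgebra hCM hdim hI hIm ha hb ha0 hab hbs hz)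
  obtain ⟨i, hi, rfl⟩ := Ideal.mem_span_singleton_mul.1 hy
  obtain ⟨w, rfl⟩ := Ideal.mem_span_singleton'.1 hw
  obtain ⟨_, hy, _, hw, h₂⟩ := Submodule.mem_sup.1
    (pow_two_le_of_isCohenMacaulayRing_reesAlgebra hCM hdim hI hIm hb ha hb0 hab.symm has hz)
  obtain ⟨i', hi', rfl⟩ := Ideal.mem_span_singleton_mul.1 hy
  obtain ⟨w', rfl⟩ := Ideal.mem_span_singleton'.1 hw
  obtain ⟨v, hv, -⟩ := exists_eq_mul_of_mul_eq_mul ha0 hreg (x := i - w') (y := i' - w)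
    (by linear_combination h₁ - h₂)
  have hz' : z = a * (i - b * v) + b * i' := by linear_combination -b * hv - h₁
  rw [hz', Ideal.span_insert, Ideal.sup_mul]
  exact Submodule.add_mem_sup
    (Ideal.mul_mem_mul (Ideal.mem_span_singleton_self a) (I.sub_mem hi (I.mul_mem_right v hb)))
    (Ideal.mul_mem_mul (Ideal.mem_span_singleton_self b) hi')

end ReesCohenMacaulay

section BrianconSkoda

variable {A B F : Type*} [CommRing A] [CommRing B] {I J : Ideal A} {a a' b b' : A}

theorem mem_span_singleton_sup_of_isCoprime {f u z : B} {K : Ideal B} (hu : IsCoprime f u)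
    (hz : u * z ∈ K) : z ∈ Ideal.span {f} ⊔ K := by
  obtain ⟨p, q, hpq⟩ := hu
  rw [← one_mul z, ← hpq, add_mul, mul_right_comm, mul_assoc q]
  exact Submodule.add_mem_sup (Ideal.mul_mem_left _ _ (Ideal.mem_span_singleton_self f))
    (K.mul_mem_left q hz)

section Normal

variable [IsDomain B] [IsNoetherianRing B] [IsIntegrallyClosed B]

/- By Nakayama some `u ∈ 1 + (f)` multiplies `Kᴺ⁺¹` into `g Kᴺ`, so that `u K / g` stabilizes
`Kᴺ` and is integral over `B`. -/
theorem exists_isCoprime_span_mul_le {K : Ideal B} {f g : B} (hg : g ∈ K) (hg0 : g ≠ 0) {N : ℕ}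
    (h : K ^ (N + 1) ≤ Ideal.span {g} * K ^ N ⊔ Ideal.span {f} * K ^ (N + 1)) :
    ∃ u, IsCoprime f u ∧ Ideal.span {u} * K ≤ Ideal.span {g} := by
  obtain ⟨u, hu, hKu⟩ := Submodule.exists_sub_one_mem_and_smul_le_of_fg_of_le_sup
    (IsNoetherian.noetherian (K ^ (N + 1))) le_rfl h
  obtain ⟨c, hc⟩ := Ideal.mem_span_singleton'.1 hu
  refine ⟨u, ⟨-c, 1, by linear_combination -hc⟩,
    Ideal.span_singleton_mul_le_iff.2 fun k hk => Ideal.mem_span_singleton.2 ?_⟩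
  have hK : K ^ N ≠ ⊥ := pow_ne_zero N (ne_of_mem_of_not_mem' hg (by simpa using hg0))
  refine dvd_of_smul_le_smul hK hg0 fun n hn => ?_
  have hkn : u * (k * n) ∈ Ideal.span {g} * K ^ N := hKu (Submodule.smul_mem_pointwise_smul _ _ _
    (pow_succ' K N ▸ Ideal.mul_mem_mul hk hn))
  obtain ⟨n', hn', hnn'⟩ := Ideal.mem_span_singleton_mul.1 hkn
  exact ⟨n', hn', by rw [hnn', mul_assoc]⟩

variable {ψ : A →+* B} {f α : B}

theorem IsJointReduction.exists_isCoprime_span_mul_le (h : IsJointReduction I J a b)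
    (hI : I.map ψ = Ideal.span {α}) (hα : α ≠ 0) (ha : ψ a = f * α) (hbJ : b ∈ J)
    (hb : ψ b ≠ 0) : ∃ u, IsCoprime f u ∧ Ideal.span {u} * J.map ψ ≤ Ideal.span {ψ b} := by
  obtain ⟨N, hN⟩ := h
  refine _root_.exists_isCoprime_span_mul_le (N := N) (Ideal.mem_map_of_mem ψ hbJ) hb ?_
  have hmap := Ideal.map_mono (f := ψ) hN
  simp only [Ideal.map_mul, Ideal.map_pow, Ideal.map_sup, Ideal.map_span, Set.image_singleton, hI,
    ha] at hmap
  rw [← Ideal.span_singleton_mul_right_mono (pow_ne_zero (N + 1) hα), ← Ideal.span_singleton_pow]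
  refine (mul_pow _ _ _).ge.trans (hmap.trans_eq ?_)
  rw [← Ideal.span_singleton_mul_span_singleton, ← Ideal.add_eq_sup, ← Ideal.add_eq_sup]
  ring

theorem IsJointReduction.exists_isCoprime_pow (h : IsJointReduction I J a b)
    (hI : I.map ψ = Ideal.span {α}) (hα : α ≠ 0) (ha : ψ a = f * α) (hbJ : b ∈ J)
    (hb : ψ b ≠ 0) (n : ℕ) : ∃ u, IsCoprime (f ^ n) u ∧ (∀ y ∈ J ^ n, ψ b ^ n ∣ u * ψ y) ∧
      ∀ z, IsIntegralOverIdeal ((I * J) ^ n) z → (α * ψ b) ^ n ∣ u * ψ z := by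
  obtain ⟨u, hu, huJ⟩ := h.exists_isCoprime_span_mul_le hI hα ha hbJ hb
  refine ⟨u ^ n, hu.pow, fun y hy => ?_, fun z hz => ?_⟩
  · rw [← Ideal.mem_span_singleton, ← Ideal.span_singleton_pow]
    refine Ideal.pow_right_mono huJ n ?_
    rw [mul_pow, Ideal.span_singleton_pow, ← Ideal.map_pow]
    exact Ideal.mul_mem_mul (Ideal.mem_span_singleton_self _) (Ideal.mem_map_of_mem ψ hy)
  · have hne : (α * ψ b) ^ n ≠ 0 := pow_ne_zero n (mul_ne_zero hα hb)
    refine Ideal.mem_span_singleton.1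
      (idealIsIntegrallyClosed_span_singleton hne _ (hz.mul_map ψ ?_))
    rw [Ideal.map_pow, Ideal.map_mul, hI, ← Ideal.span_singleton_pow, ← mul_pow, mul_left_comm,
      ← Ideal.span_singleton_pow, ← Ideal.span_singleton_mul_span_singleton]
    exact Ideal.pow_right_mono (Ideal.mul_mono_right huJ) n

end Normal

section Chart

theorem pow_add_le_span_pow_mul_sup (ha : a ∈ I) (h : I ^ 2 ≤ Ideal.span {a, a'} * I) (n N : ℕ) :
    I ^ (n + N) ≤ Ideal.span {a' ^ N} * I ^ n ⊔ Ideal.span {a ^ n} := by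
  induction n generalizing N with
  | zero => simp
  | succ n ihn =>
    induction N with
    | zero => simp
    | succ N ihN =>
      calc I ^ (n + 1 + (N + 1)) = I ^ 2 * I ^ (n + N) := by ring
        _ ≤ Ideal.span {a, a'} * I * I ^ (n + N) := by gcongr
        _ = Ideal.span {a'} * I ^ (n + 1 + N) ⊔ Ideal.span {a} * I ^ (n + (N + 1)) := by
          rw [Ideal.span_insert, ← Ideal.add_eq_sup, ← Ideal.add_eq_sup]
          ring
        _ ≤ Ideal.span {a'} * (Ideal.span {a' ^ N} * I ^ (n + 1) ⊔ Ideal.span {a ^ (n + 1)}) ⊔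
            Ideal.span {a} * (Ideal.span {a' ^ (N + 1)} * I ^ n ⊔ Ideal.span {a ^ n}) := by
          gcongr
          exact ihn _
        _ ≤ _ := by
          simp only [Ideal.mul_sup, ← Ideal.span_singleton_pow]
          refine sup_le (sup_le_sup (by rw [← mul_assoc, ← pow_succ']) Ideal.mul_le_right)
            (sup_le_sup ?_ (pow_succ' _ _).ge)
          rw [mul_left_comm, pow_succ' I]
          exact Ideal.mul_mono_right
            (Ideal.mul_mono_left ((Ideal.span_singleton_le_iff_mem _).2 ha))

variable [Field F] [Algebra A F]

theorem map_blowupChart_eq (haI : a ∈ I) (ha : algebraMap A F a ≠ 0) :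
    I.map (algebraMap A (blowupChart F I a)) =
      Ideal.span {algebraMap A (blowupChart F I a) a} := by
  refine le_antisymm (Ideal.map_le_iff_le_comap.2 fun x hx => ?_)
    ((Ideal.span_singleton_le_iff_mem _).2 (Ideal.mem_map_of_mem _ haI))
  exact Ideal.mem_span_singleton'.2 (exists_mul_algebraMap_blowupChart_eq ha hx)

variable [FaithfulSMul A F]

theorem exists_pow_mul_mem_of_algebraMap_mem (haI' : a' ∈ I) (ha' : a' ≠ 0)
    {f : blowupChart F I a'} (hf : f * algebraMap A _ a' = algebraMap A _ a) {n : ℕ} {c z : A}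
    (hz : algebraMap A (blowupChart F I a') z ∈
      Ideal.span {f ^ n} ⊔ Ideal.span {algebraMap A _ (a' ^ n * c)}) :
    ∃ N, a' ^ N * z ∈ Ideal.span {c} * I ^ (n + N) ⊔ Ideal.span {a ^ n} := by
  have hα : algebraMap A F a' ≠ 0 := by simpa using ha'
  rw [← Ideal.span_insert] at hz
  obtain ⟨p, q, hpq⟩ := Ideal.mem_span_pair.1 hz
  obtain ⟨N, x, _, hpx⟩ := (mem_blowupChart_iff haI' hα).1 p.2
  obtain ⟨M, y, hy, hqy⟩ := (mem_blowupChart_iff haI' hα).1 q.2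
  have hpq' := congrArg (Subtype.val : _ → F) hpq
  have hf' := congrArg (Subtype.val : _ → F) hf
  simp only [Subalgebra.coe_add, Subalgebra.coe_mul, Subalgebra.coe_pow,
    Subalgebra.coe_algebraMap, map_mul, map_pow] at hpq' hf'
  have heq : a' ^ (n + N + M) * z = c * (a' ^ (2 * n + N) * y) + a' ^ M * x * a ^ n := by
    apply FaithfulSMul.algebraMap_injective A F
    simp only [map_mul, map_add, map_pow, ← hpx, ← hqy, ← hpq', ← hf']
    ring
  refine ⟨n + N + M, heq ▸ Submodule.add_mem_sup
    (Ideal.mul_mem_mul (Ideal.mem_span_singleton_self c) ?_)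
    (Ideal.mul_mem_left _ _ (Ideal.mem_span_singleton_self _))⟩
  rw [show n + (n + N + M) = 2 * n + N + M by ring, pow_add]
  exact Ideal.mul_mem_mul (Ideal.pow_mem_pow haI' _) hy

theorem mem_span_mul_pow_sup_of_algebraMap_mem (haI : a ∈ I) (haI' : a' ∈ I) (ha' : a' ≠ 0)
    (hI : I ^ 2 ≤ Ideal.span {a, a'} * I) {n : ℕ}
    (hreg : ∀ N, IsSMulRegular (A ⧸ Ideal.span {a ^ n}) (a' ^ N))
    {f : blowupChart F I a'} (hf : f * algebraMap A _ a' = algebraMap A _ a) {c z : A}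
    (hz : algebraMap A (blowupChart F I a') z ∈
      Ideal.span {f ^ n} ⊔ Ideal.span {algebraMap A _ (a' ^ n * c)}) :
    z ∈ Ideal.span {c} * I ^ n ⊔ Ideal.span {a ^ n} := by
  obtain ⟨N, hN⟩ := exists_pow_mul_mem_of_algebraMap_mem haI' ha' hf hz
  have hle : Ideal.span {c} * I ^ (n + N) ⊔ Ideal.span {a ^ n} ≤
      Ideal.span {a' ^ N} * (Ideal.span {c} * I ^ n) ⊔ Ideal.span {a ^ n} := by
    refine sup_le ((Ideal.mul_mono_right (pow_add_le_span_pow_mul_sup haI hI n N)).trans ?_)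
      le_sup_right
    rw [Ideal.mul_sup, mul_left_comm]
    exact sup_le_sup_left Ideal.mul_le_right _
  obtain ⟨_, hx, y, hy, hxy⟩ := Submodule.mem_sup.1 (hle hN)
  obtain ⟨x, hxI, rfl⟩ := Ideal.mem_span_singleton_mul.1 hx
  have hzx : z - x ∈ Ideal.span {a ^ n} := isSMulRegular_quotient_iff.1 (hreg N) _
    (by rwa [mul_sub, ← hxy, add_sub_cancel_left])
  exact add_sub_cancel x z ▸ Submodule.add_mem_sup hxI hzx

end Chart

end BrianconSkoda

section IntegralClosureOfProduct

variable {A : Type*} [CommRing A] [IsDomain A] [IsNoetherianRing A] [IsIntegrallyClosed A]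
  {I J : Ideal A} {a a' b b' z : A} {n : ℕ}

theorem IsJointReduction.exists_isCoprime_blowupChart (h : IsJointReduction I J a b)
    (hI : ∀ n, IdealIsIntegrallyClosed (I ^ n)) (haI : a ∈ I) (haI' : a' ∈ I) (hbJ : b ∈ J)
    (ha' : a' ≠ 0) (hb : b ≠ 0) (n : ℕ) :
    ∃ f u : blowupChart (FractionRing A) I a', f * algebraMap A _ a' = algebraMap A _ a ∧
      IsCoprime (f ^ n) u ∧ (∀ y ∈ J ^ n, algebraMap A _ (b ^ n) ∣ u * algebraMap A _ y) ∧
      ∀ z, IsIntegralOverIdeal ((I * J) ^ n) z →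
        algebraMap A _ ((a' * b) ^ n) ∣ u * algebraMap A _ z := by
  have := isIntegrallyClosed_blowupChart (F := FractionRing A) haI' ha' hI
  have hα : algebraMap A (FractionRing A) a' ≠ 0 := by simpa using ha'
  obtain ⟨f, hf⟩ := exists_mul_algebraMap_blowupChart_eq hα haI
  obtain ⟨u, hu, huJ, huz⟩ := h.exists_isCoprime_pow (map_blowupChart_eq haI' hα)
    (by simpa using ha') hf.symm hbJ (by simpa using hb) n
  exact ⟨f, u, hf, hu, by simpa using huJ, by simpa using huz⟩

theorem IsJointReduction.mem_span_mul_pow_sup_span_pow (h : IsJointReduction I J a b)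
    (hI : ∀ n, IdealIsIntegrallyClosed (I ^ n)) (haI : a ∈ I) (haI' : a' ∈ I) (hbJ : b ∈ J)
    (ha' : a' ≠ 0) (hb : b ≠ 0) (hI2 : I ^ 2 ≤ Ideal.span {a, a'} * I)
    (hreg : ∀ N, IsSMulRegular (A ⧸ Ideal.span {a ^ n}) (a' ^ N))
    (hz : IsIntegralOverIdeal ((I * J) ^ n) z) :
    z ∈ Ideal.span {b ^ n} * I ^ n ⊔ Ideal.span {a ^ n} := by
  obtain ⟨f, u, hf, hu, -, huz⟩ := h.exists_isCoprime_blowupChart hI haI haI' hbJ ha' hb n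
  refine mem_span_mul_pow_sup_of_algebraMap_mem haI haI' ha' hI2 hreg hf
    (mem_span_singleton_sup_of_isCoprime hu ?_)
  rw [← mul_pow]
  exact Ideal.mem_span_singleton.2 (huz z hz)

theorem IsJointReduction.mem_pow_of_isIntegralOverIdeal (h : IsJointReduction I J a b)
    (hI : ∀ n, IdealIsIntegrallyClosed (I ^ n)) (haI : a ∈ I) (haI' : a' ∈ I) (hbJ : b ∈ J)
    (ha' : a' ≠ 0) (hb : b ≠ 0) (hI2 : I ^ 2 ≤ Ideal.span {a, a'} * I)
    (hreg : ∀ N, IsSMulRegular (A ⧸ Ideal.span {a ^ n}) (a' ^ N)) {y w : A} (hy : y ∈ J ^ n)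
    (hz : IsIntegralOverIdeal ((I * J) ^ n) (a ^ n * y + b ^ n * w)) : w ∈ I ^ n := by
  obtain ⟨f, u, hf, hu, huJ, huz⟩ := h.exists_isCoprime_blowupChart hI haI haI' hbJ ha' hb n
  obtain ⟨q, hq⟩ := huJ y hy
  obtain ⟨r, hr⟩ := huz _ hz
  have huw : u * algebraMap A _ w = algebraMap A _ (a' ^ n) * (r - f ^ n * q) := by
    have hbn : algebraMap A (blowupChart (FractionRing A) I a') (b ^ n) ≠ 0 := by simp [hb]
    apply mul_left_cancel₀ hbn
    simp only [map_add, map_mul, map_pow, ← hf] at hq hr ⊢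
    linear_combination hr - (f * algebraMap A _ a') ^ n * hq
  have hw := mem_span_mul_pow_sup_of_algebraMap_mem (c := 1) haI haI' ha' hI2 hreg hf
    (mem_span_singleton_sup_of_isCoprime hu
      (Ideal.mem_span_singleton.2 ⟨r - f ^ n * q, by rw [mul_one, huw]⟩))
  rw [Ideal.span_singleton_one, Ideal.top_mul, sup_eq_left.2
    ((Ideal.span_singleton_le_iff_mem _).2 (Ideal.pow_mem_pow haI n))] at hw
  exact hw

theorem IsJointReduction.mem_of_isIntegralOverIdeal_mul_pow (h : IsJointReduction I J a b)
    (hI : ∀ n, IdealIsIntegrallyClosed (I ^ n)) (hJ : ∀ n, IdealIsIntegrallyClosed (J ^ n))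
    (haI : a ∈ I) (haI' : a' ∈ I) (hbJ : b ∈ J) (hbJ' : b' ∈ J) (ha : a ≠ 0) (ha' : a' ≠ 0)
    (hb : b ≠ 0) (hb' : b' ≠ 0) (hI2 : I ^ 2 ≤ Ideal.span {a, a'} * I)
    (hJ2 : J ^ 2 ≤ Ideal.span {b, b'} * J)
    (ha_reg : ∀ N, IsSMulRegular (A ⧸ Ideal.span {a ^ n}) (a' ^ N))
    (hb_reg : ∀ N, IsSMulRegular (A ⧸ Ideal.span {b ^ n}) (b' ^ N))
    (hz : IsIntegralOverIdeal ((I * J) ^ n) z) :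
    z ∈ Ideal.span {a ^ n} * J ^ n ⊔ Ideal.span {b ^ n} * I ^ n := by
  obtain ⟨x, hx, v, hv, rfl⟩ := Submodule.mem_sup.1
    (h.mem_span_mul_pow_sup_span_pow hI haI haI' hbJ ha' hb hI2 ha_reg hz)
  obtain ⟨y, hy, rfl⟩ := Ideal.mem_span_singleton_mul.1 hx
  obtain ⟨w, rfl⟩ := Ideal.mem_span_singleton.1 hv
  have hw : w ∈ J ^ n := h.symm.mem_pow_of_isIntegralOverIdeal hJ hbJ hbJ' haI hb' ha hJ2 hb_reg
    hy (by rwa [mul_comm J I])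
  rw [sup_comm]
  exact Submodule.add_mem_sup hx (Ideal.mul_mem_mul (Ideal.mem_span_singleton_self _) hw)

end IntegralClosureOfProduct

section BlowupChartPolynomial

variable {A : Type*} [CommRing A] {F : Type*} [Field F] [Algebra A F] {I : Ideal A} {a : A}

theorem exists_ringHom_blowupChart_polynomial (haI : a ∈ I) (ha : algebraMap A F a ≠ 0) :
    ∃ θ : reesAlgebra I →+* (blowupChart F I a)[X], ∀ r n,
      ((θ r).coeff n : F) = algebraMap A F ((r : A[X]).coeff n) * (algebraMap A F a)⁻¹ ^ n := by
  let ι : (blowupChart F I a)[X] →+* F[X] := mapRingHom (algebraMap _ F)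
  have hι : Function.Injective ι := map_injective _ Subtype.val_injective
  let ψ : reesAlgebra I →+* F[X] := (compRingHom (C (algebraMap A F a)⁻¹ * X)).comp
    ((mapRingHom (algebraMap A F)).comp (reesAlgebra I).val.toRingHom)
  have hψ : ∀ r n, (ψ r).coeff n =
      algebraMap A F ((r : A[X]).coeff n) * (algebraMap A F a)⁻¹ ^ n := fun r n => by
    simp [ψ]
  have hmem : ∀ r, ψ r ∈ ι.range := fun r => by
    refine (lifts_iff_coeff_lifts _).2 fun n => ?_
    have hn : (ψ r).coeff n * algebraMap A F a ^ n = algebraMap A F ((r : A[X]).coeff n) := by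
      rw [hψ, mul_assoc, ← mul_pow, inv_mul_cancel₀ ha, one_pow, mul_one]
    exact ⟨⟨_, (mem_blowupChart_iff haI ha).2 ⟨n, _, coeff_mem_of_mem_reesAlgebra r n, hn⟩⟩, rfl⟩
  let e := RingEquiv.ofBijective ι.rangeRestrict
    ⟨fun x y h => hι (congrArg Subtype.val h), ι.rangeRestrict_surjective⟩
  refine ⟨e.symm.toRingHom.comp (ψ.codRestrict ι.range hmem), fun r n => ?_⟩
  have he : ι (e.symm ⟨ψ r, hmem r⟩) = ψ r := congrArg Subtype.val (e.apply_symm_apply _)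
  rw [← hψ, ← he]
  exact (coeff_map (algebraMap (blowupChart F I a) F) n).symm

theorem exists_reesMonomial_pow_mul_eq (haI : a ∈ I) (ha1 : a ∈ I ^ 1)
    (ha : algebraMap A F a ≠ 0) {θ : reesAlgebra I →+* (blowupChart F I a)[X]}
    (hθ : ∀ r n,
      ((θ r).coeff n : F) = algebraMap A F ((r : A[X]).coeff n) * (algebraMap A F a)⁻¹ ^ n)
    (s : (blowupChart F I a)[X]) :
    ∃ N r, θ (reesMonomial ha1 ^ N) * s = θ r := by
  have hX : θ (reesMonomial ha1) = X := by
    ext n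
    rw [hθ, coe_reesMonomial, coeff_monomial, coeff_X]
    split_ifs with hn
    · simp [← hn, ha]
    · simp
  simp only [map_pow, hX]
  induction s using Polynomial.induction_on' with
  | add s₁ s₂ h₁ h₂ =>
    obtain ⟨N₁, r₁, h₁⟩ := h₁
    obtain ⟨N₂, r₂, h₂⟩ := h₂
    refine ⟨N₁ + N₂, reesMonomial ha1 ^ N₂ * r₁ + reesMonomial ha1 ^ N₁ * r₂, ?_⟩
    simp only [map_add, map_mul, map_pow, hX, ← h₁, ← h₂]
    ring
  | monomial i s =>
    obtain ⟨N, y, hy, hsy⟩ := (mem_blowupChart_iff haI ha).1 s.2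
    have hyi : y * a ^ i ∈ I ^ (N + i) :=
      pow_add I N i ▸ Ideal.mul_mem_mul hy (Ideal.pow_mem_pow haI i)
    refine ⟨N, reesMonomial hyi, ?_⟩
    ext n
    rw [hθ, X_pow_mul_monomial, coe_reesMonomial, coeff_monomial, coeff_monomial, add_comm i]
    split_ifs with hn
    · rw [← hn, inv_pow, eq_mul_inv_iff_mul_eq₀ (pow_ne_zero _ ha), map_mul, ← hsy, map_pow,
        pow_add, mul_assoc]
    · simp

end BlowupChartPolynomial

section CohenMacaulayReesAlgebra

variable {A : Type*} [CommRing A] {K : Ideal A} {c d : A}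

theorem exists_mul_add_mul_eq_of_mem_pow (h : K ^ 2 ≤ Ideal.span {c, d} * K) {n : ℕ} {x : A}
    (hx : x ∈ K ^ (n + 2)) : ∃ y ∈ K ^ (n + 1), ∃ z ∈ K ^ (n + 1), c * y + d * z = x := by
  have hle : K ^ (n + 2) ≤ Ideal.span {c} * K ^ (n + 1) ⊔ Ideal.span {d} * K ^ (n + 1) := by
    rw [← Ideal.sup_mul, ← Ideal.span_insert, pow_succ' K n, ← mul_assoc, add_comm, pow_add]
    exact Ideal.mul_mono_left h
  obtain ⟨_, hcy, _, hdz, hyz⟩ := Submodule.mem_sup.1 (hle hx)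
  obtain ⟨y, hy, rfl⟩ := Ideal.mem_span_singleton_mul.1 hcy
  obtain ⟨z, hz, rfl⟩ := Ideal.mem_span_singleton_mul.1 hdz
  exact ⟨y, hy, z, hz, hyz⟩

variable [IsDomain A]

theorem isSuperficial_of_pow_two_le (hcK : c ∈ K) (hc : c ≠ 0)
    (hcd : IsSMulRegular (A ⧸ Ideal.span {c}) d) (h : K ^ 2 ≤ Ideal.span {c, d} * K) :
    IsSuperficial K d := by
  intro n
  induction n with
  | zero => simp
  | succ n ih =>
    intro w hw
    obtain ⟨y, hy, z, hz, hyz⟩ := exists_mul_add_mul_eq_of_mem_pow h hw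
    obtain ⟨v, hwv, rfl⟩ := exists_eq_mul_of_mul_eq_mul hc hcd (x := y) (y := w - z)
      (by linear_combination hyz)
    rw [sub_eq_iff_eq_add.1 hwv]
    exact add_mem (pow_succ' K n ▸ Ideal.mul_mem_mul hcK (ih v hy)) hz

theorem exists_mem_pow_of_mul_add_mul_eq (hcK : c ∈ K) (hc : c ≠ 0)
    (hcd : IsSMulRegular (A ⧸ Ideal.span {c}) d) (h : K ^ 2 ≤ Ideal.span {c, d} * K) {n : ℕ}
    {r s p q : A} (hr : r ∈ K ^ (n + 1)) (hp : p ∈ K ^ (n + 2))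
    (hrs : c * r + d * s = c * p + d * q) :
    ∃ y ∈ K ^ (n + 1), ∃ z ∈ K ^ n, r = c * y + d * z := by
  obtain ⟨v, -, hv⟩ := exists_eq_mul_of_mul_eq_mul hc hcd (x := r - p) (y := q - s)
    (by linear_combination hrs)
  have hvn : v ∈ K ^ n := isSuperficial_of_pow_two_le hcK hc hcd h n v
    (hv ▸ sub_mem hr (Ideal.pow_le_pow_right (Nat.le_succ _) hp))
  obtain ⟨y, hy, z, hz, rfl⟩ := exists_mul_add_mul_eq_of_mem_pow h hp
  exact ⟨y, hy, z + v, add_mem (Ideal.pow_le_pow_right (Nat.le_succ _) hz) hvn,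
    by linear_combination hv⟩

theorem isSMulRegular_quotient_algebraMap_add_reesMonomial (hc1 : c ∈ K ^ 1) (hd1 : d ∈ K ^ 1)
    (hc : c ≠ 0) (hcd : IsSMulRegular (A ⧸ Ideal.span {c}) d)
    (h : K ^ 2 ≤ Ideal.span {c, d} * K) :
    IsSMulRegular (reesAlgebra K ⧸ Ideal.span {algebraMap A (reesAlgebra K) c, reesMonomial hd1})
      (algebraMap A (reesAlgebra K) d + reesMonomial hc1) := by
  refine isSMulRegular_quotient_iff.2 fun r hr => mem_of_forall_reesMonomial_mem fun n => ?_
  obtain ⟨p, q, hpq⟩ := Ideal.mem_span_pair.1 hr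
  rw [mul_comm p, mul_comm q, add_mul] at hpq
  have hcoeff := fun n => congrArg (fun z : reesAlgebra K => (z : A[X]).coeff n) hpq
  simp only [AddMemClass.coe_add, coeff_add, coeff_algebraMap_mul] at hcoeff
  cases n with
  | zero =>
    have h0 := hcoeff 0
    rw [MulMemClass.coe_mul, MulMemClass.coe_mul, mul_coeff_zero, mul_coeff_zero] at h0
    simp only [coe_reesMonomial, coeff_monomial, one_ne_zero, if_false, zero_mul,
      add_zero] at h0
    obtain ⟨w, hw, -⟩ := exists_eq_mul_of_mul_eq_mul hc hcd h0
    refine Ideal.mem_of_dvd _ ⟨algebraMap A _ w, Subtype.ext ?_⟩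
      (Ideal.subset_span (Set.mem_insert _ _))
    simp [hw]
  | succ n =>
    have hn := hcoeff (n + 2)
    rw [coeff_reesMonomial_mul, coeff_reesMonomial_mul] at hn
    obtain ⟨y, hy, z, hz, hr⟩ := exists_mem_pow_of_mul_add_mul_eq (by simpa using hc1) hc hcd h
      (coeff_mem_of_mem_reesAlgebra r (n + 1)) (coeff_mem_of_mem_reesAlgebra p (n + 2))
      (by rw [add_comm, hn])
    refine Ideal.mem_span_pair.2 ⟨reesMonomial hy, reesMonomial hz, Subtype.ext ?_⟩
    simp [hr, mul_comm, C_mul_monomial, monomial_mul_monomial]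

variable [IsNoetherianRing A] [IsIntegrallyClosed A] {P : Ideal (reesAlgebra K)} [P.IsPrime]

theorem isCohenMacaulayLocalRing_atPrime_reesAlgebra_of_algebraMap_notMem
    (hdim : ringKrullDim A ≤ 2) {e : A} (he : e ∈ K) (heP : algebraMap A (reesAlgebra K) e ∉ P) :
    IsCohenMacaulayLocalRing (Localization.AtPrime P) := by
  refine isCohenMacaulayLocalRing_atPrime_of_injective_polynomial hdim
    (θ := (reesAlgebra K).val.toRingHom) Subtype.val_injective P fun s => ?_
  refine ⟨algebraMap A _ (e ^ s.natDegree), fun h => heP ?_,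
    ⟨_, C_pow_mul_mem_reesAlgebra he s⟩, rfl⟩
  rw [map_pow] at h
  exact Ideal.IsPrime.mem_of_pow_mem ‹_› _ h

theorem isCohenMacaulayLocalRing_atPrime_reesAlgebra_of_notMem_reesDegreePart
    (hdim : ringKrullDim A ≤ 2) (hK : ∀ n, IdealIsIntegrallyClosed (K ^ n)) {e : A} (he : e ∈ K)
    (heP : e ∉ reesDegreePart P 1) : IsCohenMacaulayLocalRing (Localization.AtPrime P) := by
  have he1 : e ∈ K ^ 1 := by rwa [pow_one]
  have he0 : e ≠ 0 := ne_of_mem_of_not_mem (zero_mem _) heP |>.symm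
  have heF : algebraMap A (FractionRing A) e ≠ 0 := by simpa using he0
  have := isIntegrallyClosed_blowupChart (F := FractionRing A) he he0 hK
  obtain ⟨θ, hθ⟩ := exists_ringHom_blowupChart_polynomial he heF
  have hinj : Function.Injective θ := (injective_iff_map_eq_zero θ).2 fun r hr => by
    refine Subtype.ext (Polynomial.ext fun n => ?_)
    simpa [hr, he0] using (hθ r n).symm
  refine isCohenMacaulayLocalRing_atPrime_of_injective_polynomial
    (ringKrullDim_blowupChart_le.trans hdim) hinj P fun s => ?_
  obtain ⟨N, r, hr⟩ := exists_reesMonomial_pow_mul_eq he he1 heF hθ s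
  exact ⟨_, fun h => heP (mem_reesDegreePart_iff.2
    ⟨he1, Ideal.IsPrime.mem_of_pow_mem ‹_› _ h⟩), r, hr⟩

end CohenMacaulayReesAlgebra

section CohenMacaulayReesAlgebra

variable {A : Type*} [CommRing A] {K : Ideal A} {c d : A}

theorem isJointReduction_self_of_pow_two_le (h : K ^ 2 ≤ Ideal.span {c, d} * K) :
    IsJointReduction K K c d := by
  refine ⟨0, ?_⟩
  rwa [pow_zero, mul_one, zero_add, pow_one, ← pow_two, ← Ideal.sup_mul, ← Ideal.span_insert]

variable [IsLocalRing A]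

theorem comap_maximalIdeal_mem_minimalPrimes (hK : maximalIdeal A ≤ K.radical)
    (hKm : K ≤ maximalIdeal A) (hcK : c ∈ K) (hdK : d ∈ K) (hc1 : c ∈ K ^ 1) (hd1 : d ∈ K ^ 1)
    (h : K ^ 2 ≤ Ideal.span {c, d} * K) :
    (maximalIdeal A).comap (reesConstantCoeff K) ∈
      (Ideal.ofList [algebraMap A (reesAlgebra K) c, reesMonomial hd1,
        algebraMap A (reesAlgebra K) d + reesMonomial hc1]).minimalPrimes := by
  refine ⟨⟨inferInstance, Ideal.span_le.2 ?_⟩, fun Q hQ _ => ?_⟩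
  · rintro r hr
    simp only [List.mem_cons, List.not_mem_nil, or_false, Set.mem_ofPred_eq] at hr
    rcases hr with rfl | rfl | rfl
    · simpa using hKm hcK
    · simp
    · simpa using hKm hdK
  · have := hQ.1
    have hmem : ∀ r ∈ [algebraMap A (reesAlgebra K) c, reesMonomial hd1,
        algebraMap A (reesAlgebra K) d + reesMonomial hc1], r ∈ Q := Ideal.span_le.1 hQ.2
    simp only [List.forall_mem_cons] at hmem
    obtain ⟨hcQ, hdtQ, hsumQ, -⟩ := hmem
    have hcomm : algebraMap A (reesAlgebra K) c * reesMonomial hd1 =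
        algebraMap A (reesAlgebra K) d * reesMonomial hc1 := by
      refine Subtype.ext ?_
      simp [C_mul_monomial, mul_comm c d]
    have hdQ : algebraMap A (reesAlgebra K) d ∈ Q := by
      refine Ideal.IsPrime.mem_of_pow_mem ‹_› 2 ?_
      rw [show algebraMap A (reesAlgebra K) d ^ 2 = algebraMap A _ d *
        (algebraMap A _ d + reesMonomial hc1) - algebraMap A _ c * reesMonomial hd1 by
          rw [hcomm]; ring]
      exact Q.sub_mem (Q.mul_mem_left _ hsumQ) (Q.mul_mem_right _ hcQ)
    exact (isJointReduction_self_of_pow_two_le h).comap_maximalIdeal_le hK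
      (mem_reesDegreePart_iff.2 ⟨hc1, (Q.add_mem_iff_right hdQ).1 hsumQ⟩)
      (mem_reesDegreePart_iff.2 ⟨hd1, hdtQ⟩) hcQ hdQ

theorem two_le_height_maximalIdeal (hdim : ringKrullDim A = 2) : 2 ≤ (maximalIdeal A).height := by
  rw [← maximalIdeal_height_eq_ringKrullDim] at hdim
  exact WithBot.coe_le_coe.1 hdim.ge

variable [IsDomain A] [IsNoetherianRing A] [IsIntegrallyClosed A]

theorem isCohenMacaulayRing_reesAlgebra_of_pow_two_le (hdim : ringKrullDim A = 2)
    (hK : maximalIdeal A ≤ K.radical) (hKm : K ≤ maximalIdeal A)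
    (hKn : ∀ n, IdealIsIntegrallyClosed (K ^ n)) (hcK : c ∈ K) (hdK : d ∈ K) (hc : c ≠ 0)
    (h : K ^ 2 ≤ Ideal.span {c, d} * K) : IsCohenMacaulayRing (reesAlgebra K) := by
  have hc1 : c ∈ K ^ 1 := by rwa [pow_one]
  have hd1 : d ∈ K ^ 1 := by rwa [pow_one]
  have hcd := isSMulRegular_quotient_span (two_le_height_maximalIdeal hdim) hc
    ((isJointReduction_self_of_pow_two_le h).maximalIdeal_le_radical_span hK hK)
  refine ⟨inferInstance, fun P hP => ?_⟩
  by_cases h0 : K ≤ P.comap (algebraMap A (reesAlgebra K))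
  · by_cases h1 : K ≤ reesDegreePart P 1
    · obtain rfl : (maximalIdeal A).comap (reesConstantCoeff K) = P :=
        (inferInstance : Ideal.IsMaximal _).eq_of_le hP.ne_top (comap_reesConstantCoeff_le
          (hK.trans ((Ideal.IsPrime.comap _).radical_le_iff.2 h0)) h1)
      exact isCohenMacaulayLocalRing_atPrime
        (isWeaklyRegular_triple (algebraMap_reesAlgebra_ne_zero hc)
          (isSMulRegular_quotient_reesMonomial hc hcd (isSuperficial_of_pow_two_le hcK hc hcd h) _)
          (isSMulRegular_quotient_algebraMap_add_reesMonomial hc1 hd1 hc hcd h))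
        (comap_maximalIdeal_mem_minimalPrimes hK hKm hcK hdK hc1 hd1 h)
    · obtain ⟨e, he, heP⟩ := SetLike.not_le_iff_exists.1 h1
      exact isCohenMacaulayLocalRing_atPrime_reesAlgebra_of_notMem_reesDegreePart hdim.le hKn he heP
  · obtain ⟨e, he, heP⟩ := SetLike.not_le_iff_exists.1 h0
    exact isCohenMacaulayLocalRing_atPrime_reesAlgebra_of_algebraMap_notMem hdim.le he heP

end CohenMacaulayReesAlgebra

section ProductReduction

variable {A : Type*} [CommRing A] {I J : Ideal A} {a a' b b' : A}

theorem pow_two_mul_le_span_pair_mul (ha : a ∈ I) (ha' : a' ∈ I) (hb : b ∈ J) (hb' : b' ∈ J)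
    (hI2 : I ^ 2 ≤ Ideal.span {a, a'} * I) (hJ2 : J ^ 2 ≤ Ideal.span {b, b'} * J)
    (h : I * J ≤ Ideal.span {a} * J ⊔ Ideal.span {b'} * I)
    (h' : I * J ≤ Ideal.span {a'} * J ⊔ Ideal.span {b} * I) :
    (I * J) ^ 2 ≤ Ideal.span {a * b, a' * b'} * (I * J) := by
  rw [← Ideal.span_singleton_le_iff_mem] at ha ha' hb hb'
  rw [Ideal.span_insert, Ideal.sup_mul] at hI2 hJ2
  simp only [Ideal.span_insert, Ideal.sup_mul, ← Ideal.span_singleton_mul_span_singleton]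
  generalize Ideal.span {a} = α at *
  generalize Ideal.span {a'} = α' at *
  generalize Ideal.span {b} = β at *
  generalize Ideal.span {b'} = β' at *
  set L := α * β * (I * J) ⊔ α' * β' * (I * J)
  have h₁ : α * β * (I * J) ≤ L := le_sup_left
  have h₂ : α' * β' * (I * J) ≤ L := le_sup_right
  have hαα' : α * α' * J ^ 2 ≤ L := calc
    α * α' * J ^ 2 ≤ α * α' * (β * J ⊔ β' * J) := Ideal.mul_mono_right hJ2
    _ = α * β * (α' * J) ⊔ α' * β' * (α * J) := by
      rw [← Ideal.add_eq_sup, ← Ideal.add_eq_sup]; ring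
    _ ≤ L := sup_le_sup (Ideal.mul_mono_right (Ideal.mul_mono_left ha'))
      (Ideal.mul_mono_right (Ideal.mul_mono_left ha))
  have hββ' : β * β' * I ^ 2 ≤ L := calc
    β * β' * I ^ 2 ≤ β * β' * (α * I ⊔ α' * I) := Ideal.mul_mono_right hI2
    _ = α * β * (I * β') ⊔ α' * β' * (I * β) := by
      rw [← Ideal.add_eq_sup, ← Ideal.add_eq_sup]; ring
    _ ≤ L := sup_le_sup (Ideal.mul_mono_right (Ideal.mul_mono_right hb'))
      (Ideal.mul_mono_right (Ideal.mul_mono_right hb))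
  calc (I * J) ^ 2 = I * J * (I * J) := pow_two _
    _ ≤ (α * J ⊔ β' * I) * (α' * J ⊔ β * I) := Ideal.mul_mono h h'
    _ = (α * α' * J ^ 2 ⊔ α * β * (I * J)) ⊔ (α' * β' * (I * J) ⊔ β * β' * I ^ 2) := by
      simp only [← Ideal.add_eq_sup]; ring
    _ ≤ L := sup_le (sup_le hαα' h₁) (sup_le h₂ hββ')

end ProductReduction

section ReductionPair

variable {A : Type*} [CommRing A] {I J : Ideal A} {a a' b b' : A}

/-- `a, a'` are nonzero elements of `I` generating a reduction of `I` with reduction number at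
most one, that is `I ^ 2 = (a, a') * I`. These are the minimal reductions of an `𝔪`-primary ideal
with Cohen–Macaulay Rees algebra in dimension two. -/
structure IsReductionPair (I : Ideal A) (a a' : A) : Prop where
  left_mem : a ∈ I
  right_mem : a' ∈ I
  left_ne_zero : a ≠ 0
  right_ne_zero : a' ≠ 0
  pow_two_le : I ^ 2 ≤ Ideal.span {a, a'} * I

theorem IsReductionPair.symm (h : IsReductionPair I a a') : IsReductionPair I a' a :=
  ⟨h.right_mem, h.left_mem, h.right_ne_zero, h.left_ne_zero, Set.pair_comm a a' ▸ h.pow_two_le⟩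

variable [IsLocalRing A]

theorem ne_bot_of_maximalIdeal_le_radical [IsReduced A] (hm : maximalIdeal A ≠ ⊥)
    (hI : maximalIdeal A ≤ I.radical) : I ≠ ⊥ := by
  rintro rfl
  rw [Ideal.radical_bot_of_isReduced] at hI
  exact hm (le_bot_iff.1 hI)

theorem maximalIdeal_ne_bot (hdim : ringKrullDim A = 2) : maximalIdeal A ≠ ⊥ := fun h => by
  simpa [h] using two_le_height_maximalIdeal hdim

variable [IsDomain A] [IsNoetherianRing A] [IsIntegrallyClosed A]

theorem IsReductionPair.isSMulRegular_quotient_pow (h : IsReductionPair I a a')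
    (hdim : 2 ≤ (maximalIdeal A).height) (hI : maximalIdeal A ≤ I.radical) (m n : ℕ) :
    IsSMulRegular (A ⧸ Ideal.span {a ^ m}) (a' ^ n) :=
  isSMulRegular_quotient_span_pow hdim h.left_ne_zero
    ((isJointReduction_self_of_pow_two_le h.pow_two_le).maximalIdeal_le_radical_span hI hI) m n

theorem IsJointReduction.mem_sup_of_isIntegralOverIdeal_mul_pow (h : IsJointReduction I J a b)
    (hdim : 2 ≤ (maximalIdeal A).height) (hI : maximalIdeal A ≤ I.radical)
    (hJ : maximalIdeal A ≤ J.radical) (hIn : ∀ n, IdealIsIntegrallyClosed (I ^ n))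
    (hJn : ∀ n, IdealIsIntegrallyClosed (J ^ n)) (ha : IsReductionPair I a a')
    (hb : IsReductionPair J b b') {n : ℕ} {z : A} (hz : IsIntegralOverIdeal ((I * J) ^ n) z) :
    z ∈ Ideal.span {a ^ n} * J ^ n ⊔ Ideal.span {b ^ n} * I ^ n :=
  h.mem_of_isIntegralOverIdeal_mul_pow hIn hJn ha.left_mem ha.right_mem hb.left_mem hb.right_mem
    ha.left_ne_zero ha.right_ne_zero hb.left_ne_zero hb.right_ne_zero ha.pow_two_le hb.pow_two_le
    (ha.isSMulRegular_quotient_pow hdim hI n) (hb.isSMulRegular_quotient_pow hdim hJ n) hz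

theorem IsJointReduction.idealIsIntegrallyClosed_mul_pow (h : IsJointReduction I J a b)
    (hdim : 2 ≤ (maximalIdeal A).height) (hI : maximalIdeal A ≤ I.radical)
    (hJ : maximalIdeal A ≤ J.radical) (hIn : ∀ n, IdealIsIntegrallyClosed (I ^ n))
    (hJn : ∀ n, IdealIsIntegrallyClosed (J ^ n)) (ha : IsReductionPair I a a')
    (hb : IsReductionPair J b b') (n : ℕ) : IdealIsIntegrallyClosed ((I * J) ^ n) := by
  intro z hz
  have hle : Ideal.span {a ^ n} * J ^ n ⊔ Ideal.span {b ^ n} * I ^ n ≤ (I * J) ^ n := by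
    rw [mul_pow, mul_comm (Ideal.span {b ^ n})]
    refine sup_le (Ideal.mul_mono_left ?_) (Ideal.mul_mono_right ?_)
    · exact (Ideal.span_singleton_le_iff_mem _).2 (Ideal.pow_mem_pow ha.left_mem n)
    · exact (Ideal.span_singleton_le_iff_mem _).2 (Ideal.pow_mem_pow hb.left_mem n)
  exact hle (h.mem_sup_of_isIntegralOverIdeal_mul_pow hdim hI hJ hIn hJn ha hb hz)

theorem IsJointReduction.mul_le_sup (h : IsJointReduction I J a b)
    (hdim : 2 ≤ (maximalIdeal A).height) (hI : maximalIdeal A ≤ I.radical)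
    (hJ : maximalIdeal A ≤ J.radical) (hIn : ∀ n, IdealIsIntegrallyClosed (I ^ n))
    (hJn : ∀ n, IdealIsIntegrallyClosed (J ^ n)) (ha : IsReductionPair I a a')
    (hb : IsReductionPair J b b') : I * J ≤ Ideal.span {a} * J ⊔ Ideal.span {b} * I := by
  intro z hz
  have hz1 : IsIntegralOverIdeal ((I * J) ^ 1) z := isIntegralOverIdeal_of_mem (by rwa [pow_one])
  simpa only [pow_one] using
    h.mem_sup_of_isIntegralOverIdeal_mul_pow hdim hI hJ hIn hJn ha hb hz1

theorem eventually_isReductionPair (hdim : ringKrullDim A = 2) (hI : maximalIdeal A ≤ I.radical)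
    (hIm : I ≤ maximalIdeal A) (hR : IsCMNormalDomain (reesAlgebra I)) :
    ∀ᶠ a in generalElements I, ∀ᶠ a' in generalElements I, IsReductionPair I a a' := by
  have := hR.2.2
  have hheight := two_le_height_maximalIdeal hdim
  have hI0 := ne_bot_of_maximalIdeal_le_radical (maximalIdeal_ne_bot hdim) hI
  have hmem := eventually_generalElements_mem I
  have hne := eventually_generalElements_ne_zero hI0
  have hsup := eventually_isSuperficial hI0
  filter_upwards [hmem, hne, hsup,
    eventually_isJointReduction hdim.le (maximalIdeal_ne_bot hdim) I I] with a ha ha0 has hred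
  filter_upwards [hmem, hne, hsup, hred] with a' ha' ha0' has' haa'
  exact ⟨ha, ha', ha0, ha0',
    pow_two_le_span_pair_mul hR.1 hheight hI hIm ha ha' ha0 ha0' haa' has has'⟩

variable [Infinite (ResidueField A)]

theorem exists_isReductionPair_isJointReduction (hdim : ringKrullDim A = 2)
    (hI : maximalIdeal A ≤ I.radical) (hIm : I ≤ maximalIdeal A)
    (hJ : maximalIdeal A ≤ J.radical) (hJm : J ≤ maximalIdeal A)
    (hIR : IsCMNormalDomain (reesAlgebra I)) (hJR : IsCMNormalDomain (reesAlgebra J)) :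
    ∃ a a' b b', IsReductionPair I a a' ∧ IsReductionPair J b b' ∧
      IsJointReduction I J a b' ∧ IsJointReduction I J a' b := by
  have hjoint := eventually_isJointReduction hdim.le (maximalIdeal_ne_bot hdim) I J
  obtain ⟨a, haI, hja⟩ := ((eventually_isReductionPair hdim hI hIm hIR).and hjoint).exists
  obtain ⟨a', haa', hja'⟩ := (haI.and hjoint).exists
  obtain ⟨b, hbJ, ha'b⟩ := ((eventually_isReductionPair hdim hJ hJm hJR).and hja').exists
  obtain ⟨b', hbb', hab'⟩ := (hbJ.and hja).exists
  exact ⟨a, a', b, b', haa', hbb', hab', ha'b⟩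

theorem isCMNormalDomain_reesAlgebra_mul (hdim : ringKrullDim A = 2)
    (hI : maximalIdeal A ≤ I.radical) (hIm : I ≤ maximalIdeal A)
    (hJ : maximalIdeal A ≤ J.radical) (hJm : J ≤ maximalIdeal A)
    (hIR : IsCMNormalDomain (reesAlgebra I)) (hJR : IsCMNormalDomain (reesAlgebra J)) :
    IsCMNormalDomain (reesAlgebra (I * J)) := by
  have hheight := two_le_height_maximalIdeal hdim
  have hI0 := ne_bot_of_maximalIdeal_le_radical (maximalIdeal_ne_bot hdim) hI
  have hJ0 := ne_bot_of_maximalIdeal_le_radical (maximalIdeal_ne_bot hdim) hJ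
  have hIn := (isIntegrallyClosed_reesAlgebra_iff hI0).1 hIR.2.2
  have hJn := (isIntegrallyClosed_reesAlgebra_iff hJ0).1 hJR.2.2
  obtain ⟨a, a', b, b', ha, hb, hab', ha'b⟩ :=
    exists_isReductionPair_isJointReduction hdim hI hIm hJ hJm hIR hJR
  have hIJn := hab'.idealIsIntegrallyClosed_mul_pow hheight hI hJ hIn hJn ha hb.symm
  have hred : (I * J) ^ 2 ≤ Ideal.span {a * b, a' * b'} * (I * J) :=
    pow_two_mul_le_span_pair_mul ha.left_mem ha.right_mem hb.left_mem hb.right_mem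
      ha.pow_two_le hb.pow_two_le (hab'.mul_le_sup hheight hI hJ hIn hJn ha hb.symm)
      (ha'b.mul_le_sup hheight hI hJ hIn hJn ha.symm hb)
  refine ⟨isCohenMacaulayRing_reesAlgebra_of_pow_two_le hdim (maximalIdeal_le_radical_mul hI hJ)
    (Ideal.mul_le_left.trans hIm) hIJn (Ideal.mul_mem_mul ha.left_mem hb.left_mem)
    (Ideal.mul_mem_mul ha.right_mem hb.right_mem)
    (mul_ne_zero ha.left_ne_zero hb.left_ne_zero) hred, inferInstance, ?_⟩
  exact (isIntegrallyClosed_reesAlgebra_iff (mul_ne_zero hI0 hJ0)).2 hIJn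

end ReductionPair

theorem stmt5_general
    (A : Type*) [CommRing A] [IsDomain A] [IsNoetherianRing A] [IsLocalRing A]
    [Infinite (IsLocalRing.ResidueField A)] [IsIntegrallyClosed A]
    (hdim : ringKrullDim A = 2)
    (I : Ideal A) (hIprim : ∃ n : ℕ, IsLocalRing.maximalIdeal A ^ n ≤ I)
    (J : Ideal A) (hJprim : ∃ n : ℕ, IsLocalRing.maximalIdeal A ^ n ≤ J)
    (hIrees : IsCMNormalDomain (reesAlgebra I))
    (hJrees : IsCMNormalDomain (reesAlgebra J)) :
    IsCMNormalDomain (reesAlgebra (I * J)) := by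
  have le_radical {K : Ideal A} : (∃ n, maximalIdeal A ^ n ≤ K) → maximalIdeal A ≤ K.radical :=
    fun ⟨n, hn⟩ _ hx => ⟨n, hn (Ideal.pow_mem_pow hx n)⟩
  rcases eq_or_ne I ⊤ with rfl | hI
  · rwa [Ideal.top_mul]
  rcases eq_or_ne J ⊤ with rfl | hJ
  · rwa [Ideal.mul_top]
  exact isCMNormalDomain_reesAlgebra_mul hdim (le_radical hIprim) (le_maximalIdeal hI)
    (le_radical hJprim) (le_maximalIdeal hJ) hIrees hJrees

/-- If the Rees algebras of the `𝔪`-primary ideals `I` and `J` are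
Cohen–Macaulay normal domains, then so is the Rees algebra of the product `IJ`. -/
theorem stmt5 (k : Type*) [Field k] [IsAlgClosed k]
    (A : Type*) [CommRing A] [IsDomain A] [IsNoetherianRing A] [IsLocalRing A]
    [Algebra k A] [IsIntegrallyClosed A]
    (hdim : ringKrullDim A = 2)
    (I : Ideal A) (hIprim : ∃ n : ℕ, IsLocalRing.maximalIdeal A ^ n ≤ I)
    (J : Ideal A) (hJprim : ∃ n : ℕ, IsLocalRing.maximalIdeal A ^ n ≤ J)
    (hIrees : IsCMNormalDomain (reesAlgebra I))
    (hJrees : IsCMNormalDomain (reesAlgebra J)) :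
    IsCMNormalDomain (reesAlgebra (I * J)) := by
  have := Infinite.of_injective _ (algebraMap k (ResidueField A)).injective
  exact stmt5_general A hdim I hIprim J hJprim hIrees hJrees
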